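/- arXiv:2509.03048 — 2 statements merged into one kernel-verified Lean document; each statement's English description precedes it below -/
import Mathlib

section
/- For the elephant random walk with memory parameter p ∈ [0, 1) on a Cayley graph that is the d-regular tree T_d (d ≥ 3), almost surely liminf_{n→∞} Δ_n/n ≥ 1 − 2/d > 0; in particular, almost surely the walk returns to the root only finitely often, i.e. ∑_{n≥1} 1(Δ_n = 0) < ∞ almost surely. -/
open MeasureTheory ProbabilityTheory Filter

noncomputable section

/-- The Cayley graph of a group with respect to a finite set of generators. -/
def cayleyGraph {G : Type*} [Group G] (S : Finset G) : SimpleGraph G where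
  Adj x y := x ≠ y ∧ (y * x⁻¹ ∈ S ∨ x * y⁻¹ ∈ S)
  symm := by
    constructor
    rintro x y ⟨h1, h2⟩
    refine ⟨h1.symm, ?_⟩
    rcases h2 with h | h
    · exact Or.inr h
    · exact Or.inl h
  loopless := ⟨fun x h => h.1 rfl⟩

/-- The elephant random walk (ERW) with memory parameter `p` on the Cayley graph of a
group `G` with respect to a symmetric generating set `S` of cardinality `d`, not
containing the identity, whose Cayley graph is a tree (hence the `d`-regular tree
`T_d`).  The steps are `g 1, g 2, …` (the value of `g 0` is irrelevant).  The law of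
the process is characterised by: `g 1` is uniform on `S`, and, conditionally on the
first `n` steps being `s 1, …, s n`, the next step `g (n+1)` equals `a ∈ S` with
probability `p * N/n + ((1-p)/(d-1)) * (n-N)/n`, where `N = #{1 ≤ k ≤ n : s k = a}`;
this is precisely the probability that the walker, recalling a uniform past epoch
`D ∈ {1, …, n}`, repeats `g D` with probability `p` and takes any given other step
with probability `(1-p)/(d-1)`. -/
structure ERW (G : Type*) [Group G] [DecidableEq G] (d : ℕ) (p : ℝ)
    (Ω : Type*) [MeasurableSpace Ω] (P : Measure Ω) where
  S : Finset G
  card_S : S.card = d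
  symm_S : ∀ s ∈ S, s⁻¹ ∈ S
  one_not_mem : (1 : G) ∉ S
  tree : (cayleyGraph S).IsTree
  g : ℕ → Ω → G
  meas_g : ∀ n a, MeasurableSet {ω | g n ω = a}
  mem_S : ∀ n, 1 ≤ n → ∀ ω, g n ω ∈ S
  init : ∀ a ∈ S, (P {ω | g 1 ω = a}).toReal = 1 / d
  update : ∀ n, 1 ≤ n → ∀ s : ℕ → G, ∀ a ∈ S,
    (P ({ω | ∀ k ∈ Finset.Icc 1 n, g k ω = s k} ∩ {ω | g (n + 1) ω = a})).toReal
      = (p * ((((Finset.Icc 1 n).filter fun k => s k = a).card : ℝ) / n)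
          + (1 - p) / ((d : ℝ) - 1)
            * (((n : ℝ) - (((Finset.Icc 1 n).filter fun k => s k = a).card : ℝ)) / n))
        * (P {ω | ∀ k ∈ Finset.Icc 1 n, g k ω = s k}).toReal

namespace ERW

variable {G : Type*} [Group G] [DecidableEq G] {d : ℕ} {p : ℝ}
  {Ω : Type*} [MeasurableSpace Ω] {P : Measure Ω}

/-- The position `w n = g n ⋯ g 1` of the walk at time `n`. -/
def pos (E : ERW G d p Ω P) : ℕ → Ω → G
  | 0 => fun _ => 1
  | n + 1 => fun ω => E.g (n + 1) ω * E.pos n ω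

/-- `Δ n`: the (word-metric) distance of the walker from the root at time `n`. -/
def dist (E : ERW G d p Ω P) (n : ℕ) (ω : Ω) : ℕ :=
  (cayleyGraph E.S).dist 1 (E.pos n ω)

/-- `N n a`: the number of `a`-steps taken by time `n`. -/
def count (E : ERW G d p Ω P) (a : G) (n : ℕ) (ω : Ω) : ℕ :=
  ((Finset.Icc 1 n).filter fun k => E.g k ω = a).card

/-- `γ n`: the unique step decreasing the distance to the root by 1
(a junk value if the walker is at the root). -/
def gammaStep (E : ERW G d p Ω P) (n : ℕ) (ω : Ω) : G :=
  @Classical.epsilon G ⟨1⟩ fun s =>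
    s ∈ E.S ∧ (cayleyGraph E.S).dist 1 (s * E.pos n ω) + 1 = E.dist n ω

/-- `ℓ n = N n (γ n)` if the walker is away from the root, and `0` otherwise. -/
def ell (E : ERW G d p Ω P) (n : ℕ) (ω : Ω) : ℕ :=
  if E.pos n ω = 1 then 0 else E.count (E.gammaStep n ω) n ω

/-- `Ξ n = (1/n) ∑_{k=0}^{n-1} (ℓ k / k - 1(Δ k > 0)/d)` (with the convention
`ℓ 0 / 0 = 0`, automatic since division by zero yields zero). -/
def Xi (E : ERW G d p Ω P) (n : ℕ) (ω : Ω) : ℝ :=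
  (1 / n) * ∑ k ∈ Finset.range n,
    ((E.ell k ω : ℝ) / k - (if 0 < E.dist k ω then 1 else 0) / d)

/-- The natural filtration `F n` generated by the steps up to time `n`. -/
def filt (E : ERW G d p Ω P) (n : ℕ) : MeasurableSpace Ω :=
  ⨆ k ∈ Finset.Icc 1 n, MeasurableSpace.comap (E.g k) ⊤

/-- `G n = E[Δ (n+1) - Δ n | F n]`. -/
def drift (E : ERW G d p Ω P) (n : ℕ) : Ω → ℝ :=
  P[fun ω => ((E.dist (n + 1) ω : ℝ) - (E.dist n ω : ℝ)) | E.filt n]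

/-- The martingale differences `Y k = Δ k - Δ (k-1) - G (k-1)`. -/
def mdiff (E : ERW G d p Ω P) (k : ℕ) (ω : Ω) : ℝ :=
  (E.dist k ω : ℝ) - (E.dist (k - 1) ω : ℝ) - E.drift (k - 1) ω

/-- The martingale `M n = ∑_{k=1}^n Y k`. -/
def mart (E : ERW G d p Ω P) (n : ℕ) (ω : Ω) : ℝ :=
  ∑ k ∈ Finset.Icc 1 n, E.mdiff k ω

end ERW

/-- The rate `r n`: `√n` in the subcritical regime `p < p_d = (d+1)/(2d)`,
`√(n / log n)` in the critical regime `p = p_d`, and `n ^ (d(1-p)/(d-1))` in the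
supercritical regime `p > p_d`. -/
def rate (p : ℝ) (d : ℕ) (n : ℕ) : ℝ :=
  if p < ((d : ℝ) + 1) / (2 * d) then Real.sqrt n
  else if p = ((d : ℝ) + 1) / (2 * d) then Real.sqrt ((n : ℝ) / Real.log n)
  else (n : ℝ) ^ ((d : ℝ) * (1 - p) / ((d : ℝ) - 1))


/-! ### Abstract ingredients -/

/-- In a tree, two neighbours of `w` that are closer to `r` than `w` coincide. -/
lemma tree_parent_unique {V : Type*} {T : SimpleGraph V} (hT : T.IsTree) (r : V) {x y w : V}
    (hx : T.Adj x w) (hy : T.Adj y w) (dx : T.dist r w = T.dist r x + 1)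
    (dy : T.dist r w = T.dist r y + 1) : x = y := by
  obtain ⟨p, hp⟩ := hT.connected.exists_walk_length_eq_dist r x
  obtain ⟨q, hq⟩ := hT.connected.exists_walk_length_eq_dist r y
  have h1 : (p.concat hx).IsPath :=
    SimpleGraph.Walk.isPath_of_length_eq_dist _ (by rw [SimpleGraph.Walk.length_concat]; omega)
  have h2 : (q.concat hy).IsPath :=
    SimpleGraph.Walk.isPath_of_length_eq_dist _ (by rw [SimpleGraph.Walk.length_concat]; omega)
  have h3 : p.concat hx = q.concat hy := (hT.existsUnique_path r w).unique h1 h2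
  have h4 := congrArg SimpleGraph.Walk.penultimate h3
  simpa using h4

/-- Orthogonal bounded variables: second moment of the partial sums. -/
lemma orth_second_moment {Ω : Type*} [MeasurableSpace Ω] {P : Measure Ω} [IsProbabilityMeasure P]
    (Y : ℕ → Ω → ℝ) (C : ℝ) (hm : ∀ k, Measurable (Y k)) (hb : ∀ k ω, |Y k ω| ≤ C)
    (ho : ∀ i j, i < j → ∫ ω, Y i ω * Y j ω ∂P = 0) (n : ℕ) :
    ∫ ω, (∑ k ∈ Finset.range n, Y k ω) ^ 2 ∂P ≤ C ^ 2 * n := by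
  have hint : ∀ i j, Integrable (fun ω => Y i ω * Y j ω) P := by
    intro i j
    refine Integrable.of_bound ((hm i).mul (hm j)).aestronglyMeasurable (C * C) ?_
    refine ae_of_all _ fun ω => ?_
    rw [Real.norm_eq_abs, abs_mul]
    exact mul_le_mul (hb i ω) (hb j ω) (abs_nonneg _) ((abs_nonneg _).trans (hb i ω))
  have h1 : ∀ ω, (∑ k ∈ Finset.range n, Y k ω) ^ 2
      = ∑ i ∈ Finset.range n, ∑ j ∈ Finset.range n, Y i ω * Y j ω := by
    intro ω
    rw [sq, Finset.sum_mul_sum]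
  simp_rw [h1]
  rw [integral_finsetSum _ fun i _ => integrable_finsetSum _ fun j _ => hint i j]
  have h2 : ∀ i ∈ Finset.range n,
      ∫ ω, ∑ j ∈ Finset.range n, Y i ω * Y j ω ∂P ≤ C ^ 2 := by
    intro i hi
    rw [integral_finsetSum _ fun j _ => hint i j]
    rw [Finset.sum_eq_single i]
    · calc ∫ ω, Y i ω * Y i ω ∂P ≤ ∫ _ω, C ^ 2 ∂P := by
            refine integral_mono (hint i i) (integrable_const _) fun ω => ?_
            have := hb i ω
            have h0 := abs_nonneg (Y i ω)
            simp only
            rw [← abs_mul_abs_self]; nlinarith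
        _ = C ^ 2 := by simp
    · intro j _ hj
      rcases lt_or_gt_of_ne hj with h | h
      · simp_rw [mul_comm (Y i _)]
        exact ho j i h
      · exact ho i j h
    · intro h; exact absurd hi h
  calc _ ≤ ∑ _i ∈ Finset.range n, C ^ 2 := Finset.sum_le_sum h2
    _ = C ^ 2 * n := by simp [mul_comm]

/-- Strong law of large numbers for bounded orthogonal variables. -/
lemma orth_slln {Ω : Type*} [MeasurableSpace Ω] {P : Measure Ω} [IsProbabilityMeasure P]
    (Y : ℕ → Ω → ℝ) (C : ℝ) (hm : ∀ k, Measurable (Y k)) (hb : ∀ k ω, |Y k ω| ≤ C)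
    (ho : ∀ i j, i < j → ∫ ω, Y i ω * Y j ω ∂P = 0) :
    ∀ᵐ ω ∂P, Tendsto (fun n : ℕ => (n : ℝ)⁻¹ * ∑ k ∈ Finset.range n, Y k ω) atTop (nhds 0) := by
  have hCnn : ∀ ω : Ω, 0 ≤ C := fun ω => (abs_nonneg _).trans (hb 0 ω)
  set M : ℕ → Ω → ℝ := fun n ω => ∑ k ∈ Finset.range n, Y k ω with hM
  have hMm : ∀ n, Measurable (M n) := fun n =>
    Finset.measurable_sum _ fun k _ => hm k
  have hMb : ∀ n ω, |M n ω| ≤ C * n := by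
    intro n ω
    calc |M n ω| ≤ ∑ k ∈ Finset.range n, |Y k ω| := Finset.abs_sum_le_sum_abs _ _
      _ ≤ ∑ _k ∈ Finset.range n, C := Finset.sum_le_sum fun k _ => hb k ω
      _ = C * n := by simp [mul_comm]
  set Z : ℕ → Ω → ℝ := fun k ω => (M ((k + 1) ^ 2) ω / ((k : ℝ) + 1) ^ 2) ^ 2 with hZ
  have hZm : ∀ k, Measurable (Z k) := fun k => ((hMm _).div_const _).pow_const _
  have hZi : ∀ k, Integrable (Z k) P := by
    intro k
    refine Integrable.of_bound (hZm k).aestronglyMeasurable (C ^ 2) (ae_of_all _ fun ω => ?_)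
    rw [Real.norm_eq_abs, abs_of_nonneg (sq_nonneg _)]
    have hk : (0 : ℝ) < ((k : ℝ) + 1) ^ 2 := by positivity
    have := hMb ((k + 1) ^ 2) ω
    push_cast at this
    rw [sq_le_sq, abs_div, abs_of_pos hk, abs_of_nonneg (hCnn ω), div_le_iff₀ hk]
    exact this
  have hZe : ∀ k, ∫ ω, Z k ω ∂P ≤ C ^ 2 * (1 / ((k : ℝ) + 1) ^ 2) := by
    intro k
    have h := orth_second_moment (P := P) Y C hm hb ho ((k + 1) ^ 2)
    simp only [hZ, div_pow]
    rw [integral_div]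
    have hk : (0 : ℝ) < ((k : ℝ) + 1) ^ 2 := by positivity
    rw [div_le_iff₀ (by positivity)]
    push_cast at h
    refine h.trans (le_of_eq ?_)
    field_simp
  have hsum : Summable fun k : ℕ => C ^ 2 * (1 / ((k : ℝ) + 1) ^ 2) := by
    refine Summable.mul_left _ ?_
    have := (summable_nat_add_iff 1).mpr (Real.summable_one_div_nat_pow.mpr (one_lt_two))
    simpa using this
  have hfin : ∫⁻ ω, ∑' k, ENNReal.ofReal (Z k ω) ∂P ≠ ⊤ := by
    rw [lintegral_tsum fun k => (hZm k).ennreal_ofReal.aemeasurable]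
    have h1 : ∀ k, ∫⁻ ω, ENNReal.ofReal (Z k ω) ∂P
        ≤ ENNReal.ofReal (C ^ 2 * (1 / ((k : ℝ) + 1) ^ 2)) := by
      intro k
      rw [← ofReal_integral_eq_lintegral_ofReal (hZi k) (ae_of_all _ fun ω => sq_nonneg _)]
      exact ENNReal.ofReal_le_ofReal (hZe k)
    refine ne_top_of_le_ne_top ?_ (ENNReal.tsum_le_tsum h1)
    rw [← ENNReal.ofReal_tsum_of_nonneg (fun k => by positivity) hsum]
    exact ENNReal.ofReal_ne_top
  have hae := ae_lt_top' (AEMeasurable.tsum fun k => (hZm k).ennreal_ofReal.aemeasurable) hfin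
  filter_upwards [hae] with ω hω
  have ht := ENNReal.tendsto_atTop_zero_of_tsum_ne_top hω.ne
  have ht2 : Tendsto (fun k => Z k ω) atTop (nhds 0) := by
    have := (ENNReal.tendsto_toReal ENNReal.zero_ne_top).comp ht
    refine Tendsto.congr (fun k => ?_) this
    simp only [Function.comp]
    exact ENNReal.toReal_ofReal (sq_nonneg _)
  have ht3 : Tendsto (fun k : ℕ => |M ((k + 1) ^ 2) ω / ((k : ℝ) + 1) ^ 2|) atTop (nhds 0) := by
    have := (Real.continuous_sqrt.tendsto 0).comp ht2
    rw [Real.sqrt_zero] at this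
    refine Tendsto.congr (fun k => ?_) this
    simp only [Function.comp, hZ]
    exact Real.sqrt_sq_eq_abs _
  have ht4 : Tendsto (fun k : ℕ => |M (k ^ 2) ω / (k : ℝ) ^ 2|) atTop (nhds 0) := by
    rw [← tendsto_add_atTop_iff_nat 1]
    simpa using ht3
  have hsq : Tendsto Nat.sqrt atTop atTop := by
    refine tendsto_atTop.2 fun b => ?_
    filter_upwards [eventually_ge_atTop (b * b)] with n hn
    exact Nat.le_sqrt.2 hn
  have ht5 : Tendsto (fun k : ℕ => |M (k ^ 2) ω / (k : ℝ) ^ 2| + 2 * C / (k : ℝ)) atTop (nhds 0) := by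
    simpa using ht4.add (tendsto_const_div_atTop_nhds_zero_nat (2 * C))
  refine squeeze_zero_norm' ?_ (ht5.comp hsq)
  filter_upwards [eventually_ge_atTop 1] with n hn
  simp only [Function.comp]
  set k := Nat.sqrt n with hk
  have hk1 : 1 ≤ k := Nat.le_sqrt.2 (by omega)
  have hkn : k ^ 2 ≤ n := by rw [sq]; exact Nat.sqrt_le n
  have hnk : n ≤ k ^ 2 + 2 * k := by
    have := Nat.sqrt_le_add n
    rw [← hk] at this
    rw [sq]; omega
  have hdiff : |M n ω - M (k ^ 2) ω| ≤ C * (2 * k) := by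
    have h1 : M n ω - M (k ^ 2) ω = ∑ i ∈ Finset.Ico (k ^ 2) n, Y i ω := by
      rw [Finset.sum_Ico_eq_sub _ hkn]
    rw [h1]
    calc |∑ i ∈ Finset.Ico (k ^ 2) n, Y i ω| ≤ ∑ i ∈ Finset.Ico (k ^ 2) n, |Y i ω| :=
          Finset.abs_sum_le_sum_abs _ _
      _ ≤ ∑ _i ∈ Finset.Ico (k ^ 2) n, C := Finset.sum_le_sum fun i _ => hb i ω
      _ = C * ((n - k ^ 2 : ℕ) : ℝ) := by simp [mul_comm]
      _ ≤ C * (2 * k) := by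
          refine mul_le_mul_of_nonneg_left ?_ (hCnn ω)
          have : n - k ^ 2 ≤ 2 * k := by omega
          exact_mod_cast this
  have hkr : (1 : ℝ) ≤ k := by exact_mod_cast hk1
  have hknr : (k : ℝ) ^ 2 ≤ n := by exact_mod_cast hkn
  have hnpos : (0 : ℝ) < n := by nlinarith
  have hMn : |M n ω| ≤ |M (k ^ 2) ω| + C * (2 * k) := by
    have := abs_sub_abs_le_abs_sub (M n ω) (M (k ^ 2) ω)
    linarith
  have hkpos : (0 : ℝ) < (k : ℝ) ^ 2 := by positivity
  change ‖(n : ℝ)⁻¹ * M n ω‖ ≤ _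
  rw [Real.norm_eq_abs, abs_mul, abs_of_pos (inv_pos.2 hnpos), abs_div, abs_of_pos hkpos]
  calc (n : ℝ)⁻¹ * |M n ω| ≤ ((k : ℝ) ^ 2)⁻¹ * (|M (k ^ 2) ω| + C * (2 * k)) :=
        mul_le_mul (inv_anti₀ hkpos hknr) hMn (abs_nonneg _) (by positivity)
    _ = |M (k ^ 2) ω| / (k : ℝ) ^ 2 + 2 * C / k := by field_simp

/-- Contraction lemma for Cesàro-type recursions. -/
lemma cesaro_contraction (y e : ℕ → ℝ) (α B : ℝ) (hα : |α| < 1) (hB : ∀ n, |y n| ≤ B)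
    (he : Tendsto e atTop (nhds 0))
    (hy : ∀ n, 1 ≤ n → y n = α * ((n : ℝ)⁻¹ * ∑ k ∈ Finset.range n, y k) + e n) :
    Tendsto y atTop (nhds 0) := by
  have step : ∀ b : ℝ, (∀ᶠ n in atTop, |y n| ≤ b) → ∀ ε > 0,
      ∀ᶠ n in atTop, |y n| ≤ |α| * b + ε := by
    intro b hb ε hε
    have hz : Tendsto (fun k => max (|y k| - b) 0) atTop (nhds 0) := by
      refine tendsto_const_nhds.congr' ?_
      filter_upwards [hb] with n hn
      exact (max_eq_right (by linarith)).symm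
    have hc := hz.cesaro
    have h1 : ∀ᶠ n : ℕ in atTop,
        (n : ℝ)⁻¹ * ∑ k ∈ Finset.range n, max (|y k| - b) 0 < ε / 2 :=
      hc.eventually (gt_mem_nhds (by positivity))
    have h2 : ∀ᶠ n : ℕ in atTop, |e n| < ε / 2 := by
      have := he.abs
      rw [abs_zero] at this
      exact this.eventually (gt_mem_nhds (by positivity))
    filter_upwards [h1, h2, eventually_ge_atTop 1] with n h1 h2 hn
    have hnpos : (0 : ℝ) < n := by exact_mod_cast hn
    have h3 : |(n : ℝ)⁻¹ * ∑ k ∈ Finset.range n, y k| ≤ b + ε / 2 := by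
      rw [abs_mul, abs_of_pos (inv_pos.2 hnpos)]
      calc (n : ℝ)⁻¹ * |∑ k ∈ Finset.range n, y k|
          ≤ (n : ℝ)⁻¹ * ∑ k ∈ Finset.range n, (b + max (|y k| - b) 0) := by
            refine mul_le_mul_of_nonneg_left ?_ (inv_pos.2 hnpos).le
            refine (Finset.abs_sum_le_sum_abs _ _).trans (Finset.sum_le_sum fun k _ => ?_)
            linarith [le_max_left (|y k| - b) 0]
        _ = b + (n : ℝ)⁻¹ * ∑ k ∈ Finset.range n, max (|y k| - b) 0 := by
            rw [Finset.sum_add_distrib, mul_add]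
            simp [hnpos.ne']
        _ ≤ b + ε / 2 := by linarith
    rw [hy n hn]
    calc |α * ((n : ℝ)⁻¹ * ∑ k ∈ Finset.range n, y k) + e n|
        ≤ |α| * |(n : ℝ)⁻¹ * ∑ k ∈ Finset.range n, y k| + |e n| := by
          rw [← abs_mul]; exact abs_add_le _ _
      _ ≤ |α| * (b + ε / 2) + ε / 2 :=
          add_le_add (mul_le_mul_of_nonneg_left h3 (abs_nonneg _)) h2.le
      _ ≤ |α| * b + ε := by nlinarith [abs_nonneg α]
  have iter : ∀ m : ℕ, ∀ ε > 0, ∀ᶠ n in atTop, |y n| ≤ |α| ^ m * B + ε := by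
    intro m
    induction m with
    | zero => intro ε hε; exact Eventually.of_forall fun n => by simpa using (hB n).trans (by linarith)
    | succ m ih =>
      intro ε hε
      filter_upwards [step _ (ih (ε / 2) (by positivity)) (ε / 2) (by positivity)] with n hn
      refine hn.trans ?_
      rw [pow_succ]
      nlinarith [abs_nonneg α]
  rw [Metric.tendsto_nhds]
  intro ε hε
  have hpow : Tendsto (fun m : ℕ => |α| ^ m * B) atTop (nhds 0) := by
    simpa using (tendsto_pow_atTop_nhds_zero_of_lt_one (abs_nonneg α) hα).mul_const B
  obtain ⟨m, hm⟩ := (hpow.eventually (gt_mem_nhds (show (0 : ℝ) < ε / 2 by positivity))).exists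
  filter_upwards [iter m (ε / 4) (by positivity)] with n hn
  rw [Real.dist_eq, sub_zero]
  linarith

/-! ### The walk -/

namespace ERW

variable {G : Type*} [Group G] [DecidableEq G] {d : ℕ} {p : ℝ}
  {Ω : Type*} [MeasurableSpace Ω] {P : Measure Ω}

/-- The history of the first `n` steps, as an element of a finite type. -/
def hist (E : ERW G d p Ω P) (n : ℕ) (ω : Ω) : Finset.Icc 1 n → E.S :=
  fun k => ⟨E.g k ω, E.mem_S k (Finset.mem_Icc.1 k.2).1 ω⟩

lemma hist_eq_iff (E : ERW G d p Ω P) (n : ℕ) (ω ω' : Ω) :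
    E.hist n ω = E.hist n ω' ↔ ∀ k ∈ Finset.Icc 1 n, E.g k ω = E.g k ω' := by
  constructor
  · intro h k hk
    exact congrArg Subtype.val (congrFun h ⟨k, hk⟩)
  · intro h
    funext k
    exact Subtype.ext (h k k.2)

lemma hist_mono (E : ERW G d p Ω P) {m n : ℕ} (hmn : m ≤ n) {ω ω' : Ω}
    (h : E.hist n ω = E.hist n ω') : E.hist m ω = E.hist m ω' := by
  rw [hist_eq_iff] at h ⊢
  intro k hk
  exact h k (Finset.Icc_subset_Icc_right hmn hk)

lemma measurableSet_hist (E : ERW G d p Ω P) (n : ℕ) (t : Finset.Icc 1 n → E.S) :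
    MeasurableSet (E.hist n ⁻¹' {t}) := by
  have : E.hist n ⁻¹' {t} = ⋂ k : Finset.Icc 1 n, {ω | E.g k ω = t k} := by
    ext ω
    simp only [Set.mem_preimage, Set.mem_singleton_iff, Set.mem_iInter, Set.mem_ofPred_eq]
    constructor
    · rintro rfl k; rfl
    · intro h; funext k; exact Subtype.ext (h k)
  rw [this]
  exact MeasurableSet.iInter fun k => E.meas_g _ _

lemma measurable_of_hist (E : ERW G d p Ω P) (n : ℕ) (f : Ω → ℝ)
    (hf : ∀ ω ω', E.hist n ω = E.hist n ω' → f ω = f ω') : Measurable f := by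
  intro B _
  have : f ⁻¹' B = ⋃ t ∈ (E.hist n '' (f ⁻¹' B)), E.hist n ⁻¹' {t} := by
    ext ω
    simp only [Set.mem_preimage, Set.mem_iUnion, Set.mem_image, Set.mem_singleton_iff, exists_prop]
    constructor
    · intro h; exact ⟨_, ⟨ω, h, rfl⟩, rfl⟩
    · rintro ⟨t, ⟨ω', h, rfl⟩, h2⟩
      rw [hf _ _ h2]; exact h
  rw [this]
  exact MeasurableSet.biUnion (Set.toFinite _).countable fun t _ => E.measurableSet_hist n t

/-- If `Y` has mean zero on every history cell and `Z` depends only on the history then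
`Z * Y` has mean zero. -/
lemma integral_mul_eq_zero (E : ERW G d p Ω P) (n : ℕ) (Z Y : Ω → ℝ)
    (hZ : ∀ ω ω', E.hist n ω = E.hist n ω' → Z ω = Z ω')
    (hi : Integrable (fun ω => Z ω * Y ω) P)
    (hY : ∀ ω₀, ∫ ω in E.hist n ⁻¹' {E.hist n ω₀}, Y ω ∂P = 0) :
    ∫ ω, Z ω * Y ω ∂P = 0 := by
  have hU : (⋃ t, E.hist n ⁻¹' {t}) = Set.univ := by
    ext ω; simp
  rw [← setIntegral_univ, ← hU, integral_iUnion_fintype (fun t => E.measurableSet_hist n t)]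
  · refine Finset.sum_eq_zero fun t _ => ?_
    by_cases ht : ∃ ω₀, E.hist n ω₀ = t
    · obtain ⟨ω₀, rfl⟩ := ht
      rw [setIntegral_congr_fun (g := fun ω => Z ω₀ * Y ω) (E.measurableSet_hist n _)]
      · rw [integral_const_mul, hY, mul_zero]
      · intro ω hω
        simp only
        rw [hZ ω ω₀ hω]
    · have : E.hist n ⁻¹' {t} = ∅ := by
        ext ω
        simp only [Set.mem_preimage, Set.mem_singleton_iff, Set.mem_empty_iff_false, iff_false]
        exact fun h => ht ⟨ω, h⟩
      rw [this]; simp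
  · intro s t hst
    refine Set.disjoint_left.2 fun ω h1 h2 => hst ?_
    exact (Set.mem_singleton_iff.1 h1).symm.trans (Set.mem_singleton_iff.1 h2)
  · exact fun t => hi.integrableOn

lemma count_congr (E : ERW G d p Ω P) (n : ℕ) (a : G) {ω ω' : Ω}
    (h : E.hist n ω = E.hist n ω') : E.count a n ω = E.count a n ω' := by
  rw [hist_eq_iff] at h
  unfold count
  congr 1
  refine Finset.filter_congr fun k hk => ?_
  rw [h k hk]

lemma pos_congr (E : ERW G d p Ω P) (n : ℕ) {ω ω' : Ω}
    (h : E.hist n ω = E.hist n ω') : E.pos n ω = E.pos n ω' := by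
  induction n with
  | zero => rfl
  | succ n ih =>
    have h1 := ih (E.hist_mono (Nat.le_succ n) h)
    rw [hist_eq_iff] at h
    simp only [pos]
    rw [h1, h (n + 1) (by simp)]

/-- Conditional probability that the next step is `a`. -/
def q (E : ERW G d p Ω P) (a : G) (n : ℕ) (ω : Ω) : ℝ :=
  p * ((E.count a n ω : ℝ) / n) + (1 - p) / ((d : ℝ) - 1) * (((n : ℝ) - (E.count a n ω : ℝ)) / n)

lemma count_le (E : ERW G d p Ω P) (a : G) (n : ℕ) (ω : Ω) : E.count a n ω ≤ n := by
  unfold count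
  exact (Finset.card_filter_le _ _).trans (by simp)

/-- Centered indicator of `g (n+1) = A n`. -/
def Yv (E : ERW G d p Ω P) (A : ℕ → Ω → G) (n : ℕ) (ω : Ω) : ℝ :=
  (if E.g (n + 1) ω = A n ω then 1 else 0) - E.q (A n ω) n ω

lemma q_bounds (E : ERW G d p Ω P) (hd : 3 ≤ d) (hp0 : 0 ≤ p) (hp1 : p < 1)
    (a : G) (n : ℕ) (ω : Ω) : 0 ≤ E.q a n ω ∧ E.q a n ω ≤ 2 := by
  have hdr : (3 : ℝ) ≤ d := by exact_mod_cast hd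
  have hc : (E.count a n ω : ℝ) ≤ n := by exact_mod_cast E.count_le a n ω
  have hc0 : (0 : ℝ) ≤ E.count a n ω := by positivity
  have h1 : 0 ≤ (E.count a n ω : ℝ) / n := by positivity
  have h2 : (E.count a n ω : ℝ) / n ≤ 1 := div_le_one_of_le₀ hc (by positivity)
  have h3 : 0 ≤ ((n : ℝ) - (E.count a n ω : ℝ)) / n := div_nonneg (by linarith) (by positivity)
  have h4 : ((n : ℝ) - (E.count a n ω : ℝ)) / n ≤ 1 := div_le_one_of_le₀ (by linarith) (by positivity)
  have h5 : 0 ≤ (1 - p) / ((d : ℝ) - 1) := div_nonneg (by linarith) (by linarith)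
  have h6 : (1 - p) / ((d : ℝ) - 1) ≤ 1 := div_le_one_of_le₀ (by linarith) (by linarith)
  unfold q
  constructor
  · positivity
  · have e1 := mul_le_mul hp1.le h2 h1 zero_le_one
    have e2 := mul_le_mul h6 h4 h3 zero_le_one
    linarith

lemma Yv_bound (E : ERW G d p Ω P) (hd : 3 ≤ d) (hp0 : 0 ≤ p) (hp1 : p < 1)
    (A : ℕ → Ω → G) (n : ℕ) (ω : Ω) : |E.Yv A n ω| ≤ 2 := by
  have h := E.q_bounds hd hp0 hp1 (A n ω) n ω
  unfold Yv
  rw [abs_le]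
  split_ifs <;> constructor <;> linarith [h.1, h.2]

lemma Yv_congr (E : ERW G d p Ω P) (A : ℕ → Ω → G)
    (hA : ∀ n ω ω', E.hist n ω = E.hist n ω' → A n ω = A n ω') (n : ℕ) {ω ω' : Ω}
    (h : E.hist (n + 1) ω = E.hist (n + 1) ω') : E.Yv A n ω = E.Yv A n ω' := by
  have h1 := E.hist_mono (Nat.le_succ n) h
  have h2 := (E.hist_eq_iff _ _ _).1 h (n + 1) (by simp)
  unfold Yv q
  rw [hA n _ _ h1, h2, E.count_congr n _ h1]

lemma Yv_cell [IsProbabilityMeasure P] (E : ERW G d p Ω P) (A : ℕ → Ω → G)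
    (hA : ∀ n ω ω', E.hist n ω = E.hist n ω' → A n ω = A n ω')
    (hAS : ∀ n ω, A n ω ∈ E.S) (n : ℕ) (hn : 1 ≤ n) (ω₀ : Ω) :
    ∫ ω in E.hist n ⁻¹' {E.hist n ω₀}, E.Yv A n ω ∂P = 0 := by
  set B := E.hist n ⁻¹' {E.hist n ω₀} with hB
  have hBm : MeasurableSet B := E.measurableSet_hist n _
  set a := A n ω₀ with ha
  have hmeas : MeasurableSet {ω | E.g (n + 1) ω = a} := E.meas_g _ _
  rw [setIntegral_congr_fun
    (g := fun ω => {ω | E.g (n + 1) ω = a}.indicator (fun _ => (1 : ℝ)) ω - E.q a n ω₀) hBm]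
  · rw [integral_sub ((integrable_const _).indicator hmeas) (integrable_const _)]
    rw [setIntegral_indicator hmeas]
    have hu := E.update n hn (fun k => E.g k ω₀) a (hAS n ω₀)
    have hBe : {ω | ∀ k ∈ Finset.Icc 1 n, E.g k ω = E.g k ω₀} = B := by
      ext ω
      exact (E.hist_eq_iff n ω ω₀).symm
    rw [hBe] at hu
    simp only [integral_const, smul_eq_mul, mul_one, measureReal_def, MeasurableSet.univ,
      Measure.restrict_apply, Set.univ_inter]
    rw [hu]
    unfold q count
    ring
  · intro ω hω
    have h : E.hist n ω = E.hist n ω₀ := hω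
    simp only [Yv, q, Set.indicator_apply, Set.mem_ofPred_eq]
    rw [hA n _ _ h, E.count_congr n _ h]

lemma Yv_slln [IsProbabilityMeasure P] (E : ERW G d p Ω P) (hd : 3 ≤ d) (hp0 : 0 ≤ p) (hp1 : p < 1)
    (A : ℕ → Ω → G)
    (hA : ∀ n ω ω', E.hist n ω = E.hist n ω' → A n ω = A n ω')
    (hAS : ∀ n ω, A n ω ∈ E.S) :
    ∀ᵐ ω ∂P, Tendsto (fun n : ℕ => (n : ℝ)⁻¹ * ∑ k ∈ Finset.range n, E.Yv A k ω)
      atTop (nhds 0) := by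
  have hm : ∀ k, Measurable (E.Yv A k) := fun k =>
    E.measurable_of_hist (k + 1) _ fun ω ω' h => E.Yv_congr A hA k h
  refine orth_slln (E.Yv A) 2 hm (E.Yv_bound hd hp0 hp1 A) ?_
  intro i j hij
  refine E.integral_mul_eq_zero j _ _ ?_ ?_ (E.Yv_cell A hA hAS j (by omega))
  · intro ω ω' h
    exact E.Yv_congr A hA i (E.hist_mono hij h)
  · refine Integrable.of_bound ((hm i).mul (hm j)).aestronglyMeasurable (2 * 2)
      (ae_of_all _ fun ω => ?_)
    rw [Real.norm_eq_abs, abs_mul]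
    exact mul_le_mul (E.Yv_bound hd hp0 hp1 A i ω) (E.Yv_bound hd hp0 hp1 A j ω)
      (abs_nonneg _) (by norm_num)

lemma count_eq_sum (E : ERW G d p Ω P) (a : G) (n : ℕ) (ω : Ω) :
    (E.count a n ω : ℝ) = ∑ k ∈ Finset.range n, (if E.g (k + 1) ω = a then (1 : ℝ) else 0) := by
  unfold count
  rw [Finset.card_filter]
  push_cast
  rw [Finset.range_eq_Ico, Finset.sum_Ico_add' (fun k => if E.g k ω = a then (1 : ℝ) else 0) 0 n 1]
  rfl

/-- Step frequencies converge to `1/d`. -/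
lemma freq_tendsto [IsProbabilityMeasure P] (E : ERW G d p Ω P) (hd : 3 ≤ d) (hp0 : 0 ≤ p)
    (hp1 : p < 1) (a : G) (ha : a ∈ E.S) :
    ∀ᵐ ω ∂P, Tendsto (fun n : ℕ => (E.count a n ω : ℝ) / n) atTop (nhds (1 / d)) := by
  have hdr : (3 : ℝ) ≤ d := by exact_mod_cast hd
  filter_upwards [E.Yv_slln hd hp0 hp1 (fun _ _ => a) (fun _ _ _ _ => rfl) (fun _ _ => ha)]
    with ω hω
  set β : ℝ := (1 - p) / ((d : ℝ) - 1) with hβ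
  have hβ0 : 0 < β := div_pos (by linarith) (by linarith)
  have hβ1 : β ≤ (1 - p) / 2 := by
    rw [hβ]; exact div_le_div_of_nonneg_left (by linarith) (by norm_num) (by linarith)
  have hβd : β * (d - 1) = 1 - p := by rw [hβ]; field_simp [show (d : ℝ) - 1 ≠ 0 by linarith]
  -- the value of `q` at time zero is irrelevant; `e0` records the discrepancy there
  set y : ℕ → ℝ := fun n => (E.count a n ω : ℝ) / n - 1 / d with hy
  set δ : ℝ := E.q a 0 ω - (1 / d + (p - β) * y 0) with hδ
  have hqy : ∀ k, 1 ≤ k → E.q a k ω = 1 / d + (p - β) * y k := by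
    intro k hk
    have hk0 : (k : ℝ) ≠ 0 := by positivity
    simp only [q, hy, ← hβ]
    have : β * (d : ℝ) = 1 - p + β := by linarith
    field_simp
    linear_combination (k : ℝ) * this
  have hconv : Tendsto y atTop (nhds 0) := by
    refine cesaro_contraction y
      (fun n => (n : ℝ)⁻¹ * ∑ k ∈ Finset.range n, E.Yv (fun _ _ => a) k ω + δ / n)
      (p - β) 2 ?_ ?_ ?_ ?_
    · rw [abs_lt]; constructor <;> linarith
    · intro n
      have hc : (E.count a n ω : ℝ) ≤ n := by exact_mod_cast E.count_le a n ω
      have h1 : 0 ≤ (E.count a n ω : ℝ) / n := by positivity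
      have h2 : (E.count a n ω : ℝ) / n ≤ 1 := div_le_one_of_le₀ hc (by positivity)
      have h3 : 0 ≤ (1 : ℝ) / d := by positivity
      have h4 : (1 : ℝ) / d ≤ 1 := div_le_one_of_le₀ (by linarith) (by positivity)
      simp only [hy]
      rw [abs_le]; constructor <;> linarith
    · simpa using hω.add (tendsto_const_div_atTop_nhds_zero_nat δ)
    · intro n hn
      have hn0 : (n : ℝ) ≠ 0 := by positivity
      have hs : ∑ k ∈ Finset.range n, E.q a k ω
          = ∑ k ∈ Finset.range n, (1 / (d : ℝ) + (p - β) * y k) + δ := by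
        obtain ⟨m, rfl⟩ : ∃ m, n = m + 1 := ⟨n - 1, by omega⟩
        rw [Finset.sum_range_succ', Finset.sum_range_succ']
        rw [Finset.sum_congr rfl fun k _ => hqy (k + 1) (by omega)]
        rw [hδ]; ring
      have hYs : ∑ k ∈ Finset.range n, E.Yv (fun _ _ => a) k ω
          = (E.count a n ω : ℝ) - (n * (1 / d) + (p - β) * ∑ k ∈ Finset.range n, y k + δ) := by
        simp only [Yv]
        rw [Finset.sum_sub_distrib, ← E.count_eq_sum, hs, Finset.sum_add_distrib, ← Finset.mul_sum]
        simp
      rw [hYs]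
      simp only [hy]
      field_simp
      ring
  have := hconv.add_const (1 / (d : ℝ))
  simpa [hy] using this

lemma adj_mul (E : ERW G d p Ω P) {s : G} (hs : s ∈ E.S) (w : G) :
    (cayleyGraph E.S).Adj w (s * w) := by
  refine ⟨fun h => E.one_not_mem ?_, Or.inl (by simpa using hs)⟩
  have : s = 1 := by simpa using h.symm
  rwa [← this]

/-- A step such that all other steps from `w` increase the distance to the root. -/
lemma exists_back (E : ERW G d p Ω P) (hd : 3 ≤ d) (w : G) :
    ∃ a ∈ E.S, ∀ s ∈ E.S, s ≠ a →
      (cayleyGraph E.S).dist 1 (s * w) = (cayleyGraph E.S).dist 1 w + 1 := by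
  by_cases h : ∃ a ∈ E.S, (cayleyGraph E.S).dist 1 (a * w) ≠ (cayleyGraph E.S).dist 1 w + 1
  · obtain ⟨a, ha, hne⟩ := h
    refine ⟨a, ha, fun s hs hsa => ?_⟩
    by_contra hs2
    have h1 := E.adj_mul ha w
    have h2 := E.adj_mul hs w
    have e1 := E.tree.dist_eq_dist_add_one_of_adj 1 h1
    have e2 := E.tree.dist_eq_dist_add_one_of_adj 1 h2
    have := tree_parent_unique E.tree 1 h1.symm h2.symm (by tauto) (by tauto)
    exact hsa (mul_right_cancel this).symm
  · push Not at h
    obtain ⟨a, ha⟩ : E.S.Nonempty := by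
      rw [← Finset.card_pos, E.card_S]; omega
    exact ⟨a, ha, fun s hs _ => h s hs⟩

end ERW

/-- almost surely `liminf Δ n / n ≥ 1 - 2/d > 0`; in particular the
walk almost surely returns to the root only finitely often. -/
theorem erw_liminf_speed_and_finitely_many_returns
    {G : Type*} [Group G] [DecidableEq G] {Ω : Type*} [MeasurableSpace Ω]
    {P : Measure Ω} [IsProbabilityMeasure P]
    (d : ℕ) (hd : 3 ≤ d) (p : ℝ) (hp0 : 0 ≤ p) (hp1 : p < 1)
    (E : ERW G d p Ω P) :
    0 < 1 - 2 / (d : ℝ) ∧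
    ∀ᵐ ω ∂P,
      (1 - 2 / (d : ℝ) ≤
        Filter.liminf (fun n : ℕ => (E.dist n ω : ℝ) / n) atTop) ∧
      {n : ℕ | 1 ≤ n ∧ E.dist n ω = 0}.Finite := by
  have hdr : (3 : ℝ) ≤ d := by exact_mod_cast hd
  have hpos : 0 < 1 - 2 / (d : ℝ) := by
    rw [sub_pos, div_lt_one (by linarith)]; linarith
  refine ⟨hpos, ?_⟩
  choose γ hγS hγ using E.exists_back hd
  set A : ℕ → Ω → G := fun n ω => γ (E.pos n ω) with hA
  have h1 := E.Yv_slln hd hp0 hp1 A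
    (fun n ω ω' h => by simp only [hA]; rw [E.pos_congr n h]) (fun n ω => hγS _)
  have h2 : ∀ᵐ ω ∂P, ∀ a ∈ E.S,
      Tendsto (fun n : ℕ => (E.count a n ω : ℝ) / n) atTop (nhds (1 / d)) := by
    rw [Filter.eventually_all_finset]
    exact fun a ha => E.freq_tendsto hd hp0 hp1 a ha
  filter_upwards [h1, h2] with ω hω1 hω2
  -- conditional probabilities converge
  have hq : ∀ a ∈ E.S, Tendsto (fun n : ℕ => E.q a n ω) atTop (nhds (1 / d)) := by
    intro a ha
    have hf := hω2 a ha
    have hg := (hf.const_mul p).add ((hf.const_sub 1).const_mul ((1 - p) / ((d : ℝ) - 1)))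
    have hlim : p * (1 / (d : ℝ)) + (1 - p) / ((d : ℝ) - 1) * (1 - 1 / (d : ℝ)) = 1 / d := by
      have : (d : ℝ) - 1 ≠ 0 := by linarith
      have : (d : ℝ) ≠ 0 := by linarith
      field_simp
      ring
    rw [hlim] at hg
    refine hg.congr' ?_
    filter_upwards [eventually_ge_atTop 1] with n hn
    have hn0 : (n : ℝ) ≠ 0 := by positivity
    simp only [ERW.q]
    rw [sub_div (n : ℝ), div_self hn0]
  have hqA : Tendsto (fun n : ℕ => E.q (A n ω) n ω) atTop (nhds (1 / d)) := by
    rw [Metric.tendsto_nhds]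
    intro ε hε
    have : ∀ᶠ n : ℕ in atTop, ∀ a ∈ E.S, Dist.dist (E.q a n ω) (1 / d) < ε := by
      rw [Filter.eventually_all_finset]
      exact fun a ha => Metric.tendsto_nhds.1 (hq a ha) ε hε
    filter_upwards [this] with n hn
    exact hn _ (hγS _)
  have hlow : Tendsto (fun n : ℕ => 1 - 2 * ((n : ℝ)⁻¹ * ∑ k ∈ Finset.range n, E.Yv A k ω
      + (n : ℝ)⁻¹ * ∑ k ∈ Finset.range n, E.q (A k ω) k ω)) atTop (nhds (1 - 2 / (d : ℝ))) := by
    have := ((hω1.add hqA.cesaro).const_mul 2).const_sub 1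
    convert this using 2
    ring
  have hstep : ∀ n, (E.dist n ω : ℝ) + 1 - 2 * (if E.g (n + 1) ω = A n ω then 1 else 0)
      ≤ E.dist (n + 1) ω ∧ E.dist (n + 1) ω ≤ E.dist n ω + 1 := by
    intro n
    have hs := E.mem_S (n + 1) (by omega) ω
    have hadj := E.adj_mul hs (E.pos n ω)
    have e := E.tree.dist_eq_dist_add_one_of_adj 1 hadj
    have e1 : E.dist n ω = (cayleyGraph E.S).dist 1 (E.pos n ω) := rfl
    have e2 : E.dist (n + 1) ω = (cayleyGraph E.S).dist 1 (E.g (n + 1) ω * E.pos n ω) := rfl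
    rw [← e1, ← e2] at e
    split_ifs with h
    · have h3 : E.dist n ω ≤ E.dist (n + 1) ω + 1 := by omega
      have h3r : (E.dist n ω : ℝ) ≤ E.dist (n + 1) ω + 1 := by exact_mod_cast h3
      exact ⟨by linarith, by omega⟩
    · have h3 := hγ (E.pos n ω) _ hs h
      rw [← e1, ← e2] at h3
      refine ⟨?_, by omega⟩
      rw [h3]; push_cast; linarith
  have hdist0 : E.dist 0 ω = 0 := by simp [ERW.dist, ERW.pos]
  have hup : ∀ n, E.dist n ω ≤ n := by
    intro n
    induction n with
    | zero => exact hdist0.le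
    | succ n ih => have := (hstep n).2; omega
  have hsumlow : ∀ n : ℕ, (n : ℝ) - 2 * (∑ k ∈ Finset.range n, E.Yv A k ω
      + ∑ k ∈ Finset.range n, E.q (A k ω) k ω) ≤ E.dist n ω := by
    intro n
    rw [← Finset.sum_add_distrib]
    induction n with
    | zero => simp
    | succ n ih =>
      have h3 := (hstep n).1
      rw [Finset.sum_range_succ]
      have h4 : E.Yv A n ω + E.q (A n ω) n ω = if E.g (n + 1) ω = A n ω then 1 else 0 := by
        simp [ERW.Yv]
      rw [h4]
      push_cast
      linarith
  have hle : ∀ᶠ n : ℕ in atTop, 1 - 2 * ((n : ℝ)⁻¹ * ∑ k ∈ Finset.range n, E.Yv A k ω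
      + (n : ℝ)⁻¹ * ∑ k ∈ Finset.range n, E.q (A k ω) k ω) ≤ (E.dist n ω : ℝ) / n := by
    filter_upwards [eventually_ge_atTop 1] with n hn
    have hn0 : (0 : ℝ) < n := by exact_mod_cast hn
    rw [le_div_iff₀ hn0]
    refine le_trans (le_of_eq ?_) (hsumlow n)
    field_simp
  have hev : ∀ c < 1 - 2 / (d : ℝ), ∀ᶠ n : ℕ in atTop, c < (E.dist n ω : ℝ) / n := by
    intro c hc
    filter_upwards [hle, hlow.eventually (lt_mem_nhds hc)] with n h3 h4
    exact h4.trans_le h3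
  constructor
  · refine le_of_forall_lt fun c hc => ?_
    obtain ⟨c', hcc, hc'⟩ := exists_between hc
    refine hcc.trans_le (le_liminf_of_le ?_ ((hev c' hc').mono fun n h => h.le))
    refine IsBoundedUnder.isCoboundedUnder_ge ⟨1, ?_⟩
    rw [eventually_map]
    refine Eventually.of_forall fun n => div_le_one_of_le₀ ?_ (by positivity)
    exact_mod_cast hup n
  · obtain ⟨N, hN⟩ := eventually_atTop.1 (hev 0 hpos)
    refine (Set.finite_lt_nat N).subset fun n hn => ?_
    by_contra hlt
    have h3 := hN n (not_lt.1 hlt)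
    rw [hn.2] at h3
    simp at h3

end
end

section
/- Let Γ = Z^{*d} be the free group of rank d ≥ 2 with its standard symmetric generating set of 2d elements, and consider the elephant random walk on Cay(Γ; S) (whose Cayley graph is the 2d-regular tree) with memory parameter p ∈ [0, 1). Then the word-metric distance Δ_n of the walk from the identity dominates the ℓ¹-norm of the multi-dimensional elephant random walk S_n on Z^d obtained by abelianization of the same step sequence, i.e. ‖S_n‖₁ ≤ Δ_n for all n; consequently there exists C > 0 such that P(Δ_n = 0) ≤ C · n^{−d/2} for all n ≥ 1. -/
open MeasureTheory ProbabilityTheory Filter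

noncomputable section

/-- The standard symmetric generating set `{a₁, a₁⁻¹, …, a_d, a_d⁻¹}` of the free
group of rank `d`. -/
def freeGroupGens (d : ℕ) : Finset (FreeGroup (Fin d)) :=
  (Finset.univ.image fun i => FreeGroup.of i) ∪
    (Finset.univ.image fun i => (FreeGroup.of i)⁻¹)

/-- The abelianization map `FreeGroup (Fin d) →* Multiplicative (Fin d → ℤ)`, sending
the generator `a_i` to `e_i` (and hence `a_i⁻¹` to `-e_i`). -/
def freeGroupAbelianize (d : ℕ) :
    FreeGroup (Fin d) →* Multiplicative (Fin d → ℤ) :=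
  FreeGroup.lift fun i => Multiplicative.ofAdd (Pi.single i (1 : ℤ))

/-! ### Part A: weighted path sums and the memory-tree argument -/

/-- Path functional: sum over all paths of the weight times the product of test functions. -/
def pathSum {T : Type*} [Fintype T] (q : ∀ n : ℕ, (Fin n → T) → ℝ) (n : ℕ)
    (h : ℕ → T → ℂ) : ℂ :=
  ∑ s : Fin n → T, (q n s : ℂ) * ∏ i : Fin n, h i (s i)

theorem pathSum_succ {T : Type*} [Fintype T] (q : ∀ n : ℕ, (Fin n → T) → ℝ)
    (μ : T → T → ℝ)
    (hq : ∀ n : ℕ, 1 ≤ n → ∀ (s : Fin n → T) (a : T),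
      q (n + 1) (Fin.snoc s a) = ((1 / (n : ℝ)) * ∑ i, μ (s i) a) * q n s)
    (n : ℕ) (hn : 1 ≤ n) (h : ℕ → T → ℂ) :
    pathSum q (n + 1) h = (1 / (n : ℂ)) * ∑ D : Fin n, ∑ s : Fin n → T,
      (q n s : ℂ) * ((∏ i : Fin n, h i (s i)) * ∑ a, (μ (s D) a : ℂ) * h n a) := by
  unfold pathSum
  rw [← (Fin.snocEquiv (fun _ : Fin (n + 1) => T)).sum_comp, Fintype.sum_prod_type]
  simp only [Fin.snocEquiv, Equiv.coe_fn_mk]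
  rw [Finset.sum_comm, Finset.sum_comm (s := (Finset.univ : Finset (Fin n))), Finset.mul_sum]
  refine Finset.sum_congr rfl fun s _ => ?_
  have : ∀ a : T, ((q (n + 1) (Fin.snoc (α := fun _ => T) s a) : ℝ) : ℂ) *
      ∏ i : Fin (n + 1), h i ((Fin.snoc (α := fun _ => T) s a : Fin (n+1) → T) i)
      = (1 / (n : ℂ)) * ∑ D : Fin n, (q n s : ℂ) * ((∏ i : Fin n, h i (s i)) *
          ((μ (s D) a : ℂ) * h n a)) := by
    intro a
    rw [hq n hn s a, Fin.prod_univ_castSucc]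
    simp only [Fin.snoc_castSucc, Fin.snoc_last, Fin.val_castSucc, Fin.val_last]
    push_cast
    rw [← Finset.mul_sum, ← Finset.mul_sum, ← Finset.sum_mul]
    ring
  rw [Finset.sum_congr rfl fun a _ => this a, ← Finset.mul_sum, Finset.sum_comm]
  simp only [Finset.mul_sum]

theorem pathSum_update {T : Type*} [Fintype T] (q : ∀ n : ℕ, (Fin n → T) → ℝ)
    (n : ℕ) (h : ℕ → T → ℂ) (D : Fin n) (ψ : T → ℂ) :
    ∑ s : Fin n → T, (q n s : ℂ) * ((∏ i : Fin n, h i (s i)) * ψ (s D))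
      = pathSum q n (Function.update h D (fun a => h D a * ψ a)) := by
  unfold pathSum
  refine Finset.sum_congr rfl fun s _ => ?_
  congr 1
  rw [← Finset.mul_prod_erase Finset.univ _ (Finset.mem_univ D),
    ← Finset.mul_prod_erase Finset.univ
      (fun i : Fin n => Function.update h D (fun a => h D a * ψ a) i (s i)) (Finset.mem_univ D)]
  have : ∀ i ∈ Finset.univ.erase D,
      Function.update h (D : ℕ) (fun a => h D a * ψ a) (i : ℕ) (s i) = h i (s i) := by
    intro i hi
    have : (i : ℕ) ≠ D := fun hh => (Finset.mem_erase.1 hi).1 (Fin.ext hh)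
    rw [Function.update_of_ne this]
  rw [Finset.prod_congr rfl this, Function.update_self]
  ring

theorem pathSum_norm_le_one {T : Type*} [Fintype T] (q : ∀ n : ℕ, (Fin n → T) → ℝ)
    (n : ℕ) (hq0 : ∀ s, 0 ≤ q n s) (hq1 : ∑ s, q n s ≤ 1) (h : ℕ → T → ℂ)
    (hh : ∀ k a, ‖h k a‖ ≤ 1) : ‖pathSum q n h‖ ≤ 1 := by
  unfold pathSum
  refine (norm_sum_le _ _).trans (le_trans (Finset.sum_le_sum fun s _ => ?_) hq1)
  rw [norm_mul, norm_prod, Complex.norm_real, Real.norm_of_nonneg (hq0 s)]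
  exact mul_le_of_le_one_right (hq0 s)
    (Finset.prod_le_one (fun _ _ => norm_nonneg _) fun _ _ => hh _ _)

theorem pathSum_bound {T : Type*} [Fintype T] (q : ∀ n : ℕ, (Fin n → T) → ℝ)
    (μ : T → T → ℝ) (hμ0 : ∀ b a, 0 ≤ μ b a) (hμ1 : ∀ b, ∑ a, μ b a = 1)
    (hq0 : ∀ n s, 0 ≤ q n s) (hq1 : ∀ n, ∑ s, q n s ≤ 1)
    (hq : ∀ n : ℕ, 1 ≤ n → ∀ (s : Fin n → T) (a : T),
      q (n + 1) (Fin.snoc s a) = ((1 / (n : ℝ)) * ∑ i, μ (s i) a) * q n s)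
    (e : T → ℂ) (r : ℝ) (hr0 : 0 < r) (hr1 : r ≤ 1)
    (hφ : ∀ b, ‖∑ a, (μ b a : ℂ) * e a‖ ≤ r)
    (m : ℕ) (hm : 1 ≤ m) (j : ℕ) :
    m + j ≤ 2 * m + 1 → ∀ (h : ℕ → T → ℂ) (U : Finset ℕ), (∀ k a, ‖h k a‖ ≤ 1) →
      (∀ k, m ≤ k → k < m + j → k ∉ U → h k = e) →
      r ^ U.card * ‖pathSum q (m + j) h‖ ≤ ((1 + r) / 2) ^ j := by
  induction j with
  | zero =>
    intro _ h U hh _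
    have h1 := pathSum_norm_le_one q m (hq0 m) (hq1 m) h hh
    have h2 : r ^ U.card ≤ 1 := pow_le_one₀ hr0.le hr1
    simp only [add_zero, pow_zero]
    exact mul_le_one₀ h2 (norm_nonneg _) h1
  | succ j ih =>
    intro hj h U hh hU
    set k := m + j with hk
    have hk1 : 1 ≤ k := by omega
    have hkR : (0 : ℝ) < k := by exact_mod_cast hk1
    -- normalised message
    obtain ⟨c, ψ, hc0, hψ, hcψ, hcU⟩ : ∃ (c : ℝ) (ψ : T → ℂ), 0 ≤ c ∧ (∀ b, ‖ψ b‖ ≤ 1) ∧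
        (∀ b, ∑ a, (μ b a : ℂ) * h k a = c * ψ b) ∧
        r ^ U.card * c ≤ r ^ ((U.erase k).card + 1) := by
      by_cases hkU : k ∈ U
      · refine ⟨1, fun b => ∑ a, (μ b a : ℂ) * h k a, zero_le_one, fun b => ?_, fun b => by simp, ?_⟩
        · refine (norm_sum_le _ _).trans (le_trans (Finset.sum_le_sum fun a _ => ?_) (hμ1 b).le)
          rw [norm_mul, Complex.norm_real, Real.norm_of_nonneg (hμ0 b a)]
          exact mul_le_of_le_one_right (hμ0 b a) (hh _ _)
        · rw [Finset.card_erase_add_one hkU, mul_one]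
      · have hke : h k = e := hU k (by omega) (by omega) hkU
        refine ⟨r, fun b => (∑ a, (μ b a : ℂ) * h k a) / r, hr0.le, fun b => ?_, fun b => ?_, ?_⟩
        · rw [norm_div, Complex.norm_real, Real.norm_of_nonneg hr0.le, div_le_one hr0, hke]
          exact hφ b
        · have : (r : ℂ) ≠ 0 := by exact_mod_cast hr0.ne'
          field_simp
        · rw [Finset.erase_eq_of_notMem hkU, pow_succ]
    have hF : pathSum q (m + (j + 1)) h = (1 / (k : ℂ)) * ∑ D : Fin k,
        c * pathSum q k (Function.update h D (fun a => h D a * ψ a)) := by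
      rw [← add_assoc, ← hk, pathSum_succ q μ hq k hk1]
      congr 1
      refine Finset.sum_congr rfl fun D _ => ?_
      rw [← pathSum_update, Finset.mul_sum]
      refine Finset.sum_congr rfl fun s _ => ?_
      rw [hcψ]; ring
    have hterm : ∀ D : Fin k, r ^ ((U.erase k).card + 1) *
        ‖pathSum q k (Function.update h D (fun a => h D a * ψ a))‖
        ≤ (if (D : ℕ) < m then r else 1) * ((1 + r) / 2) ^ j := by
      intro D
      have hh' : ∀ i a, ‖Function.update h (D : ℕ) (fun a => h D a * ψ a) i a‖ ≤ 1 := by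
        intro i a
        by_cases hi : i = D
        · rw [hi, Function.update_self, norm_mul]
          exact mul_le_one₀ (hh _ _) (norm_nonneg _) (hψ _)
        · rw [Function.update_of_ne hi]; exact hh _ _
      by_cases hD : (D : ℕ) < m
      · have := ih (by omega) (Function.update h D (fun a => h D a * ψ a)) (U.erase k) hh' (by
          intro i hi1 hi2 hi3
          rw [Function.update_of_ne (by omega)]
          refine hU i hi1 (by omega) fun hc => hi3 (Finset.mem_erase.2 ⟨by omega, hc⟩))
        rw [if_pos hD, pow_succ]
        calc _ = r * (r ^ (U.erase k).card *
              ‖pathSum q k (Function.update h D (fun a => h D a * ψ a))‖) := by ring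
          _ ≤ _ := by gcongr
      · have := ih (by omega) (Function.update h D (fun a => h D a * ψ a))
          (insert (D : ℕ) (U.erase k)) hh' (by
          intro i hi1 hi2 hi3
          rw [Finset.mem_insert, not_or] at hi3
          rw [Function.update_of_ne hi3.1]
          refine hU i hi1 (by omega) fun hc => hi3.2 (Finset.mem_erase.2 ⟨by omega, hc⟩))
        rw [if_neg hD, one_mul]
        refine le_trans ?_ this
        exact mul_le_mul_of_nonneg_right
          (pow_le_pow_of_le_one hr0.le hr1 (Finset.card_insert_le _ _)) (norm_nonneg _)
    have hsum : ∑ D : Fin k, (if (D : ℕ) < m then r else 1) ≤ k * ((1 + r) / 2) := by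
      rw [Fin.sum_univ_eq_sum_range (fun D => if D < m then r else 1) k, hk, Finset.sum_range_add]
      rw [Finset.sum_congr rfl (g := fun _ => r) (fun x hx => if_pos (Finset.mem_range.1 hx)),
        Finset.sum_congr rfl (s₁ := Finset.range j) (g := fun _ => (1 : ℝ))
          (fun x _ => if_neg (by omega : ¬ (m + x < m)))]
      simp only [Finset.sum_const, Finset.card_range, nsmul_eq_mul]
      have : (j : ℝ) ≤ m := by exact_mod_cast (by omega : j ≤ m)
      push_cast
      nlinarith
    rw [hF, norm_mul]
    have hnk : ‖(1 / (k : ℂ))‖ = 1 / (k : ℝ) := by simp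
    rw [hnk]
    calc r ^ U.card * (1 / (k : ℝ) * ‖∑ D : Fin k,
          (c : ℂ) * pathSum q k (Function.update h D (fun a => h D a * ψ a))‖)
        ≤ r ^ U.card * (1 / (k : ℝ) * ∑ D : Fin k,
          c * ‖pathSum q k (Function.update h D (fun a => h D a * ψ a))‖) := by
          gcongr
          refine (norm_sum_le _ _).trans (Finset.sum_le_sum fun D _ => ?_)
          rw [norm_mul, Complex.norm_real, Real.norm_of_nonneg hc0]
      _ = (1 / (k : ℝ)) * ∑ D : Fin k, (r ^ U.card * c) *
          ‖pathSum q k (Function.update h D (fun a => h D a * ψ a))‖ := by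
          simp only [Finset.mul_sum]
          refine Finset.sum_congr rfl fun D _ => ?_
          ring
      _ ≤ (1 / (k : ℝ)) * ∑ D : Fin k, (if (D : ℕ) < m then r else 1) * ((1 + r) / 2) ^ j := by
          refine mul_le_mul_of_nonneg_left (Finset.sum_le_sum fun D _ => ?_) (by positivity)
          exact le_trans (mul_le_mul_of_nonneg_right hcU (norm_nonneg _)) (hterm D)
      _ = (1 / (k : ℝ)) * (∑ D : Fin k, (if (D : ℕ) < m then r else 1)) * ((1 + r) / 2) ^ j := by
          rw [← Finset.sum_mul]; ring
      _ ≤ (1 / (k : ℝ)) * (k * ((1 + r) / 2)) * ((1 + r) / 2) ^ j := by gcongr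
      _ = ((1 + r) / 2) ^ (j + 1) := by
          field_simp
          ring
/-! ### Part B: analytic estimates -/

theorem integral_exp_sin_le (t : ℝ) (ht : 0 < t) :
    ∫ x in Set.Ioc (-Real.pi) Real.pi, Real.exp (-(t * Real.sin x ^ 2))
      ≤ 3 * Real.sqrt (Real.pi ^ 3 / 4) * (Real.sqrt t)⁻¹ := by
  have hpi := Real.pi_pos
  set b : ℝ := t * (2 / Real.pi) ^ 2 with hb
  have hb0 : 0 < b := by positivity
  set G : ℝ → ℝ := fun x => Real.exp (-b * x ^ 2) with hG
  have hGi : Integrable G := integrable_exp_neg_mul_sq hb0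
  have hGint : ∫ x, G x = Real.sqrt (Real.pi / b) := integral_gaussian b
  have key : ∀ x : ℝ, |x| ≤ Real.pi / 2 → Real.exp (-(t * Real.sin x ^ 2)) ≤ G x := by
    intro x hx
    have h1 := Real.mul_abs_le_abs_sin hx
    have h2 : (2 / Real.pi * |x|) ^ 2 ≤ |Real.sin x| ^ 2 := by gcongr
    rw [mul_pow, sq_abs, sq_abs] at h2
    simp only [hG]
    apply Real.exp_le_exp.2
    have := mul_le_mul_of_nonneg_left h2 ht.le
    rw [hb]; linarith
  have hi1 : Integrable (fun x => G (x - Real.pi)) := hGi.comp_sub_right _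
  have hi2 : Integrable (fun x => G (x + Real.pi)) := hGi.comp_add_right _
  have hGpos : ∀ x, 0 < G x := fun x => Real.exp_pos _
  have hpt : ∀ x ∈ Set.Ioc (-Real.pi) Real.pi, Real.exp (-(t * Real.sin x ^ 2)) ≤
      G x + G (x - Real.pi) + G (x + Real.pi) := by
    intro x hx
    have p1 := hGpos x
    have p2 := hGpos (x - Real.pi)
    have p3 := hGpos (x + Real.pi)
    rcases le_total |x| (Real.pi / 2) with h | h
    · have := key x h; linarith
    · rcases le_total 0 x with h0 | h0
      · rw [abs_of_nonneg h0] at h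
        have := key (x - Real.pi) (by rw [abs_le]; constructor <;> linarith [hx.2])
        rw [Real.sin_sub_pi, neg_sq] at this
        linarith
      · rw [abs_of_nonpos h0] at h
        have := key (x + Real.pi) (by rw [abs_le]; constructor <;> linarith [hx.1])
        rw [Real.sin_add_pi, neg_sq] at this
        linarith
  have hI : Integrable (fun x => G x + G (x - Real.pi) + G (x + Real.pi)) := (hGi.add hi1).add hi2
  calc _ ≤ ∫ x in Set.Ioc (-Real.pi) Real.pi, (G x + G (x - Real.pi) + G (x + Real.pi)) := by
        refine setIntegral_mono_on ?_ hI.integrableOn measurableSet_Ioc hpt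
        exact (Continuous.integrableOn_Ioc (by fun_prop))
    _ ≤ ∫ x, (G x + G (x - Real.pi) + G (x + Real.pi)) := by
        refine setIntegral_le_integral hI (Eventually.of_forall fun x => ?_)
        have p1 := hGpos x
        have p2 := hGpos (x - Real.pi)
        have p3 := hGpos (x + Real.pi)
        simp only [Pi.zero_apply]; linarith
    _ = 3 * Real.sqrt (Real.pi / b) := by
        rw [integral_add (f := fun x => G x + G (x - Real.pi)) (hGi.add hi1) hi2,
          integral_add hGi hi1, integral_sub_right_eq_self G, integral_add_right_eq_self G, hGint]
        ring
    _ = _ := by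
        have : Real.pi / b = (Real.pi ^ 3 / 4) * t⁻¹ := by rw [hb]; field_simp; ring
        rw [this, Real.sqrt_mul (by positivity), Real.sqrt_inv]
        ring

theorem integral_exp_int (x : ℤ) :
    ∫ θ in Set.Ioc (-Real.pi) Real.pi, Complex.exp (Complex.I * θ * x)
      = if x = 0 then ((2 * Real.pi : ℝ) : ℂ) else 0 := by
  have hpi := Real.pi_pos
  rw [← intervalIntegral.integral_of_le (by linarith)]
  split_ifs with h
  · subst h; simp; ring
  · have hc : Complex.I * x ≠ 0 := by simp [h]
    have : ∀ θ : ℝ, Complex.exp (Complex.I * θ * x) = Complex.exp ((Complex.I * x) * θ) := by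
      intro θ; ring_nf
    simp_rw [this]
    rw [integral_exp_mul_complex hc]
    have : Complex.exp (Complex.I * x * (Real.pi : ℝ)) =
        Complex.exp (Complex.I * x * ((-Real.pi : ℝ) : ℂ)) := by
      rw [Complex.exp_eq_exp_iff_exists_int]
      exact ⟨x, by push_cast; ring⟩
    rw [this]; simp

/-- The real phase of a step. -/
def phase {d : ℕ} (θ : Fin d → ℝ) (a : Fin d × Bool) : ℝ := if a.2 then θ a.1 else -θ a.1

theorem norm_phase_three (x y : ℝ) :
    ‖Complex.exp (Complex.I * x) + 2 * Real.cos y‖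
      ≤ 3 - (Real.sin x ^ 2 + Real.sin y ^ 2) / 3 := by
  have hx := Real.sin_sq_add_cos_sq x
  have hy := Real.sin_sq_add_cos_sq y
  have h0 : 0 ≤ 3 - (Real.sin x ^ 2 + Real.sin y ^ 2) / 3 := by nlinarith [sq_nonneg (Real.cos x), sq_nonneg (Real.cos y)]
  refine abs_le_of_sq_le_sq' ?_ h0 |>.2
  rw [← Complex.normSq_eq_norm_sq, Complex.normSq_apply, mul_comm Complex.I]
  simp only [Complex.add_re, Complex.add_im, Complex.exp_ofReal_mul_I_re, Complex.exp_ofReal_mul_I_im]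
  have e1 : ((2 : ℂ) * (Real.cos y : ℝ)).re = 2 * Real.cos y := by
    rw [← Complex.ofReal_ofNat, ← Complex.ofReal_mul, Complex.ofReal_re]
  have e2 : ((2 : ℂ) * (Real.cos y : ℝ)).im = 0 := by
    rw [← Complex.ofReal_ofNat, ← Complex.ofReal_mul, Complex.ofReal_im]
  rw [e1, e2]
  nlinarith [sq_nonneg (Real.cos x - Real.cos y), sq_nonneg (Real.sin y),
    sq_nonneg (Real.sin x ^ 2 + Real.sin y ^ 2)]

/-- One-step kernel. -/
def stepKer (d : ℕ) (p ε : ℝ) (b a : Fin d × Bool) : ℝ := if b = a then p else ε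

theorem stepKer_sum {d : ℕ} (p ε : ℝ) (hε : p + (2 * d - 1) * ε = 1) (b : Fin d × Bool) :
    ∑ a, stepKer d p ε b a = 1 := by
  have : ∀ a, stepKer d p ε b a = ε + (if b = a then p - ε else 0) := by
    intro a; unfold stepKer; split_ifs <;> ring
  simp_rw [this]
  rw [Finset.sum_add_distrib, Finset.sum_ite_eq]
  simp
  linarith

theorem stepKer_char {d : ℕ} (hd : 2 ≤ d) (p ε : ℝ) (hp : 0 ≤ p) (hε0 : 0 ≤ ε)
    (hε : p + (2 * d - 1) * ε = 1) (θ : Fin d → ℝ) (b : Fin d × Bool) :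
    ‖∑ a, (stepKer d p ε b a : ℂ) * Complex.exp (Complex.I * phase θ a)‖
      ≤ 1 - ε / 3 * ∑ i, Real.sin (θ i) ^ 2 := by
  obtain ⟨i, σ⟩ := b
  have : Nontrivial (Fin d) := Fin.nontrivial_iff_two_le.2 hd
  obtain ⟨j, hj⟩ := exists_ne i
  have h1 : ∑ a, (stepKer d p ε (i, σ) a : ℂ) * Complex.exp (Complex.I * phase θ a)
      = ε * ∑ k, 2 * (Real.cos (θ k) : ℂ) +
        (p - ε) * Complex.exp (Complex.I * phase θ (i, σ)) := by
    have : ∀ a, (stepKer d p ε (i, σ) a : ℂ) * Complex.exp (Complex.I * phase θ a)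
        = ε * Complex.exp (Complex.I * phase θ a) + (if (i, σ) = a then
          (p - ε) * Complex.exp (Complex.I * phase θ a) else 0) := by
      intro a; unfold stepKer; split_ifs
      · ring
      · simp
    simp_rw [this]
    rw [Finset.sum_add_distrib, Finset.sum_ite_eq, if_pos (Finset.mem_univ _), ← Finset.mul_sum,
      Fintype.sum_prod_type]
    congr 2
    refine Finset.sum_congr rfl fun k _ => ?_
    rw [Fintype.sum_bool]
    simp only [phase, if_true, Bool.false_eq_true, if_false]
    rw [Complex.ofReal_cos, Complex.two_cos]
    push_cast
    congr 2 <;> ring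
  set x : ℝ := phase θ (i, σ) with hx
  have hcx : Real.cos x = Real.cos (θ i) := by
    rw [hx]; unfold phase; split_ifs <;> simp
  have hsx : Real.sin (-x) ^ 2 = Real.sin (θ i) ^ 2 := by
    rw [hx]; unfold phase; split_ifs <;> simp
  have hsplit : ∀ {M : Type} [AddCommMonoid M] (f : Fin d → M), ∑ k, f k = f i + (f j +
      ∑ k ∈ (Finset.univ.erase i).erase j, f k) := by
    intro M _ f
    rw [Finset.add_sum_erase _ _ (Finset.mem_erase.2 ⟨hj, Finset.mem_univ j⟩),
      Finset.add_sum_erase _ _ (Finset.mem_univ i)]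
  have h2 : ε * ∑ k, 2 * (Real.cos (θ k) : ℂ) + (p - ε) * Complex.exp (Complex.I * x)
      = p * Complex.exp (Complex.I * x) +
        ε * (Complex.exp (Complex.I * (-x : ℝ)) + 2 * Real.cos (θ j)) +
        ε * ∑ k ∈ (Finset.univ.erase i).erase j, 2 * (Real.cos (θ k) : ℂ) := by
    rw [hsplit, ← hcx, Complex.ofReal_cos, Complex.two_cos]
    push_cast
    have e1 : Complex.exp (Complex.I * x) = Complex.exp (x * Complex.I) := by ring_nf
    have e2 : Complex.exp (Complex.I * -x) = Complex.exp (-x * Complex.I) := by ring_nf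
    rw [e1, e2]
    ring
  rw [h1, h2]
  have n1 : ‖(p : ℂ) * Complex.exp (Complex.I * x)‖ = p := by
    rw [norm_mul, Complex.norm_exp_I_mul_ofReal, Complex.norm_real, Real.norm_of_nonneg hp, mul_one]
  have n2 : ‖(ε : ℂ) * (Complex.exp (Complex.I * (-x : ℝ)) + 2 * Real.cos (θ j))‖
      ≤ ε * (3 - (Real.sin (θ i) ^ 2 + Real.sin (θ j) ^ 2) / 3) := by
    rw [norm_mul, Complex.norm_real, Real.norm_of_nonneg hε0, ← hsx]
    exact mul_le_mul_of_nonneg_left (norm_phase_three _ _) hε0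
  have n3 : ‖(ε : ℂ) * ∑ k ∈ (Finset.univ.erase i).erase j, 2 * (Real.cos (θ k) : ℂ)‖
      ≤ ε * ∑ k ∈ (Finset.univ.erase i).erase j, (2 - Real.sin (θ k) ^ 2 / 3) := by
    rw [norm_mul, Complex.norm_real, Real.norm_of_nonneg hε0]
    refine mul_le_mul_of_nonneg_left ((norm_sum_le _ _).trans (Finset.sum_le_sum fun k _ => ?_)) hε0
    rw [norm_mul, Complex.norm_real, Complex.norm_ofNat, Real.norm_eq_abs]
    have := Real.sin_sq_add_cos_sq (θ k)
    have hc := Real.abs_cos_le_one (θ k)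
    have h3 := sq_abs (Real.cos (θ k))
    nlinarith [abs_nonneg (Real.cos (θ k))]
  have hs := hsplit (fun k => (2 - Real.sin (θ k) ^ 2 / 3))
  have hs2 : ∑ k : Fin d, (2 - Real.sin (θ k) ^ 2 / 3)
      = 2 * d - (∑ i, Real.sin (θ i) ^ 2) / 3 := by
    rw [Finset.sum_sub_distrib, Finset.sum_div]; simp; ring
  have hR : ∑ k ∈ (Finset.univ.erase i).erase j, (2 - Real.sin (θ k) ^ 2 / 3)
      = 2 * d - 4 - (∑ i, Real.sin (θ i) ^ 2) / 3 + (Real.sin (θ i) ^ 2 + Real.sin (θ j) ^ 2) / 3 := by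
    linarith
  rw [hR] at n3
  refine (norm_add₃_le).trans ?_
  rw [n1]
  refine (add_le_add (add_le_add le_rfl n2) n3).trans (le_of_eq ?_)
  linear_combination hε
/-! ### Part C: Fourier inversion -/

/-- The image in `ℤ^d` of a step. -/
def stepVec {d : ℕ} (a : Fin d × Bool) : Fin d → ℤ := Pi.single a.1 (if a.2 then 1 else -1)

theorem phase_eq {d : ℕ} (θ : Fin d → ℝ) (a : Fin d × Bool) :
    phase θ a = ∑ j, θ j * (stepVec a j : ℝ) := by
  obtain ⟨i, σ⟩ := a
  rw [Finset.sum_eq_single i]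
  · unfold phase stepVec; cases σ <;> simp
  · intro j _ hj; simp [stepVec, hj]
  · simp

theorem prod_exp_phase {d n : ℕ} (θ : Fin d → ℝ) (s : Fin n → Fin d × Bool) :
    ∏ i, Complex.exp (Complex.I * phase θ (s i))
      = ∏ j, Complex.exp (Complex.I * θ j * ((∑ i, stepVec (s i) j : ℤ) : ℂ)) := by
  rw [← Complex.exp_sum, ← Complex.exp_sum]
  congr 1
  simp_rw [phase_eq]
  push_cast
  simp_rw [Finset.mul_sum]
  rw [Finset.sum_comm]
  refine Finset.sum_congr rfl fun j _ => Finset.sum_congr rfl fun i _ => by ring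

theorem fourier_inversion {d : ℕ} (q : ∀ n : ℕ, (Fin n → Fin d × Bool) → ℝ) (n : ℕ) :
    ∫ θ, pathSum q n (fun _ a => Complex.exp (Complex.I * phase θ a))
      ∂(Measure.pi fun _ : Fin d => volume.restrict (Set.Ioc (-Real.pi) Real.pi))
    = (((2 * Real.pi) ^ d * ∑ s : Fin n → Fin d × Bool,
        if (∀ j, ∑ i, stepVec (s i) j = 0) then q n s else 0 : ℝ) : ℂ) := by
  unfold pathSum
  rw [integral_finsetSum]
  · rw [Finset.mul_sum]
    push_cast
    refine Finset.sum_congr rfl fun s _ => ?_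
    rw [integral_const_mul]
    simp_rw [prod_exp_phase]
    rw [integral_fintype_prod_eq_prod (fun (j : Fin d) (x : ℝ) =>
      Complex.exp (Complex.I * x * ((∑ i, stepVec (s i) j : ℤ) : ℂ)))]
    simp_rw [integral_exp_int]
    split_ifs with h
    · rw [Finset.prod_congr rfl fun j _ => if_pos (h j)]
      simp
      ring
    · push Not at h
      obtain ⟨j, hj⟩ := h
      rw [Finset.prod_eq_zero (Finset.mem_univ j) (if_neg hj)]
      simp
  · intro s _
    refine Integrable.const_mul ?_ _
    refine Integrable.of_bound (C := 1) ?_ (Eventually.of_forall fun θ => ?_)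
    · refine Continuous.aestronglyMeasurable ?_
      simp_rw [prod_exp_phase]
      fun_prop
    · rw [norm_prod]
      exact Finset.prod_le_one (fun _ _ => norm_nonneg _) fun i _ => by
        rw [Complex.norm_exp_I_mul_ofReal]

theorem pathSum_char_bound {d : ℕ} (hd : 2 ≤ d) (p ε : ℝ) (hp : 0 ≤ p) (hε0 : 0 < ε)
    (hε : p + (2 * d - 1) * ε = 1)
    (q : ∀ n : ℕ, (Fin n → Fin d × Bool) → ℝ)
    (hq0 : ∀ n s, 0 ≤ q n s) (hq1 : ∀ n, ∑ s, q n s ≤ 1)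
    (hq : ∀ n : ℕ, 1 ≤ n → ∀ (s : Fin n → Fin d × Bool) (a : Fin d × Bool),
      q (n + 1) (Fin.snoc s a) = ((1 / (n : ℝ)) * ∑ i, stepKer d p ε (s i) a) * q n s)
    (n : ℕ) (hn : 1 ≤ n) (θ : Fin d → ℝ) :
    ‖pathSum q n (fun _ a => Complex.exp (Complex.I * phase θ a))‖
      ≤ Real.exp 1 * ∏ j, Real.exp (-((ε / 12 * n) * Real.sin (θ j) ^ 2)) := by
  set x : ℝ := ε / 3 * ∑ i, Real.sin (θ i) ^ 2 with hx
  have hd' : (2 : ℝ) ≤ d := by exact_mod_cast hd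
  have hs0 : 0 ≤ ∑ i, Real.sin (θ i) ^ 2 := Finset.sum_nonneg fun i _ => sq_nonneg _
  have hs1 : ∑ i, Real.sin (θ i) ^ 2 ≤ d := by
    calc _ ≤ ∑ _i : Fin d, (1 : ℝ) := Finset.sum_le_sum fun i _ => Real.sin_sq_le_one _
      _ = d := by simp
  have hx0 : 0 ≤ x := by positivity
  have hx1 : x ≤ 1 / 3 := by
    have : ε * ∑ i, Real.sin (θ i) ^ 2 ≤ ε * d := by gcongr
    have : ε * d ≤ 1 := by nlinarith
    rw [hx]; linarith
  have hb := pathSum_bound q (stepKer d p ε)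
    (fun b a => by unfold stepKer; split_ifs <;> linarith) (stepKer_sum p ε hε) hq0 hq1 hq
    (fun a => Complex.exp (Complex.I * phase θ a)) (1 - x) (by linarith) (by linarith)
    (stepKer_char hd p ε hp hε0.le hε θ) ((n + 1) / 2) (by omega) (n / 2) (by omega)
    (fun _ a => Complex.exp (Complex.I * phase θ a)) ∅
    (fun _ a => by rw [Complex.norm_exp_I_mul_ofReal]) (fun _ _ _ _ => rfl)
  rw [show (n + 1) / 2 + n / 2 = n by omega, Finset.card_empty, pow_zero, one_mul] at hb
  refine hb.trans ?_
  have h1 : (1 + (1 - x)) / 2 ≤ Real.exp (-(x / 2)) := by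
    have := Real.add_one_le_exp (-(x / 2)); linarith
  refine (pow_le_pow_left₀ (by linarith) h1 _).trans ?_
  rw [← Real.exp_nat_mul, ← Real.exp_sum, ← Real.exp_add]
  apply Real.exp_le_exp.2
  have h2 : (n : ℝ) ≤ 2 * ((n / 2 : ℕ) : ℝ) + 1 := by exact_mod_cast (by omega : n ≤ 2 * (n / 2) + 1)
  rw [Finset.sum_neg_distrib, ← Finset.mul_sum]
  have h3 : ε / 12 * n * ∑ i, Real.sin (θ i) ^ 2 = x * n / 4 := by rw [hx]; ring
  rw [h3]
  nlinarith

theorem return_bound {d : ℕ} (hd : 2 ≤ d) (p ε : ℝ) (hp : 0 ≤ p) (hε0 : 0 < ε)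
    (hε : p + (2 * d - 1) * ε = 1)
    (q : ∀ n : ℕ, (Fin n → Fin d × Bool) → ℝ)
    (hq0 : ∀ n s, 0 ≤ q n s) (hq1 : ∀ n, ∑ s, q n s ≤ 1)
    (hq : ∀ n : ℕ, 1 ≤ n → ∀ (s : Fin n → Fin d × Bool) (a : Fin d × Bool),
      q (n + 1) (Fin.snoc s a) = ((1 / (n : ℝ)) * ∑ i, stepKer d p ε (s i) a) * q n s) :
    ∃ C : ℝ, 0 < C ∧ ∀ n : ℕ, 1 ≤ n →
      (∑ s : Fin n → Fin d × Bool, if (∀ j, ∑ i, stepVec (s i) j = 0) then q n s else 0)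
        ≤ C * (n : ℝ) ^ (-((d : ℝ) / 2)) := by
  have hpi := Real.pi_pos
  set K : ℝ := 3 * Real.sqrt (Real.pi ^ 3 / 4) with hK
  have hK0 : 0 < K := by positivity
  refine ⟨Real.exp 1 * (K * (Real.sqrt (ε / 12))⁻¹ / (2 * Real.pi)) ^ d, by positivity, ?_⟩
  intro n hn
  have hn0 : (0 : ℝ) < n := by exact_mod_cast hn
  set ν := Measure.pi fun _ : Fin d => (volume : Measure ℝ).restrict (Set.Ioc (-Real.pi) Real.pi)
    with hν
  set Z : ℝ := ∑ s : Fin n → Fin d × Bool,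
    if (∀ j, ∑ i, stepVec (s i) j = 0) then q n s else 0 with hZ
  have hZ0 : 0 ≤ Z := Finset.sum_nonneg fun s _ => by split_ifs <;> [exact hq0 _ _; exact le_rfl]
  have h1 : (2 * Real.pi) ^ d * Z ≤ Real.exp 1 * (K * (Real.sqrt (ε / 12 * n))⁻¹) ^ d := by
    calc (2 * Real.pi) ^ d * Z
        = ‖∫ θ, pathSum q n (fun _ a => Complex.exp (Complex.I * phase θ a)) ∂ν‖ := by
          rw [hν, fourier_inversion, Complex.norm_real, Real.norm_of_nonneg (by positivity)]
      _ ≤ ∫ θ, Real.exp 1 * ∏ j, Real.exp (-((ε / 12 * n) * Real.sin (θ j) ^ 2)) ∂ν := by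
          refine norm_integral_le_of_norm_le ?_ (Eventually.of_forall fun θ =>
            pathSum_char_bound hd p ε hp hε0 hε q hq0 hq1 hq n hn θ)
          refine Integrable.const_mul ?_ _
          refine Integrable.of_bound (C := 1) ?_ (Eventually.of_forall fun θ => ?_)
          · exact Continuous.aestronglyMeasurable (by fun_prop)
          · rw [norm_prod]
            refine Finset.prod_le_one (fun _ _ => norm_nonneg _) fun i _ => ?_
            rw [Real.norm_of_nonneg (Real.exp_pos _).le, Real.exp_le_one_iff]
            have : 0 ≤ ε / 12 * n * Real.sin (θ i) ^ 2 := by positivity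
            linarith
      _ = Real.exp 1 * (∫ x in Set.Ioc (-Real.pi) Real.pi,
            Real.exp (-((ε / 12 * n) * Real.sin x ^ 2))) ^ d := by
          rw [integral_const_mul, hν, integral_fintype_prod_eq_pow
            (fun x : ℝ => Real.exp (-((ε / 12 * n) * Real.sin x ^ 2))), Fintype.card_fin]
      _ ≤ _ := by
          gcongr
          exact integral_exp_sin_le _ (by positivity)
  have h2 : (n : ℝ) ^ (-((d : ℝ) / 2)) = ((Real.sqrt n)⁻¹) ^ d := by
    rw [Real.rpow_neg hn0.le, inv_pow, Real.sqrt_eq_rpow, ← Real.rpow_natCast,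
      ← Real.rpow_mul hn0.le]
    congr 2; ring
  rw [h2]
  have h3 : Z ≤ (Real.exp 1 * (K * (Real.sqrt (ε / 12 * n))⁻¹) ^ d) / (2 * Real.pi) ^ d := by
    rw [le_div_iff₀ (by positivity)]; linarith
  refine h3.trans (le_of_eq ?_)
  rw [Real.sqrt_mul (by positivity), mul_inv, mul_pow, mul_pow, div_pow, mul_pow]
  ring
/-! ### Part D: the walk on the free group -/

/-- The generator of the free group coded by a step. -/
def stepGen {d : ℕ} (a : Fin d × Bool) : FreeGroup (Fin d) :=
  if a.2 then FreeGroup.of a.1 else (FreeGroup.of a.1)⁻¹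

theorem mem_freeGroupGens_iff {d : ℕ} (x : FreeGroup (Fin d)) :
    x ∈ freeGroupGens d ↔ ∃ a : Fin d × Bool, stepGen a = x := by
  unfold freeGroupGens stepGen
  simp only [Finset.mem_union, Finset.mem_image, Finset.mem_univ, true_and, Prod.exists,
    Bool.exists_bool, if_true, Bool.false_eq_true, if_false]
  constructor
  · rintro (⟨i, h⟩ | ⟨i, h⟩)
    · exact ⟨i, Or.inr h⟩
    · exact ⟨i, Or.inl h⟩
  · rintro ⟨i, h | h⟩
    · exact Or.inr ⟨i, h⟩
    · exact Or.inl ⟨i, h⟩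

theorem abelianize_stepGen {d : ℕ} (a : Fin d × Bool) :
    Multiplicative.toAdd (freeGroupAbelianize d (stepGen a)) = stepVec a := by
  obtain ⟨i, σ⟩ := a
  cases σ
  · simp only [stepGen, stepVec, freeGroupAbelianize, Bool.false_eq_true, if_false, map_inv,
      FreeGroup.lift_apply_of, toAdd_inv, toAdd_ofAdd]
    rw [Pi.single_neg]
  · simp [stepGen, stepVec, freeGroupAbelianize]

theorem sum_natAbs_stepVec {d : ℕ} (a : Fin d × Bool) :
    ∑ i, (stepVec a i).natAbs = 1 := by
  obtain ⟨i, σ⟩ := a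
  rw [Finset.sum_eq_single i]
  · cases σ <;> simp [stepVec]
  · intro j _ hj; simp [stepVec, hj]
  · simp

/-- The `ℓ¹` norm of the abelianization. -/
def abNorm {d : ℕ} (x : FreeGroup (Fin d)) : ℕ :=
  ∑ i : Fin d, (Multiplicative.toAdd (freeGroupAbelianize d x) i).natAbs

theorem abNorm_inv {d : ℕ} (x : FreeGroup (Fin d)) : abNorm x⁻¹ = abNorm x := by
  unfold abNorm
  refine Finset.sum_congr rfl fun i _ => ?_
  rw [map_inv, toAdd_inv, Pi.neg_apply, Int.natAbs_neg]

theorem abNorm_mul_le {d : ℕ} (x y : FreeGroup (Fin d)) : abNorm (x * y) ≤ abNorm x + abNorm y := by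
  unfold abNorm
  rw [← Finset.sum_add_distrib]
  refine Finset.sum_le_sum fun i _ => ?_
  rw [map_mul, toAdd_mul, Pi.add_apply]
  exact Int.natAbs_add_le _ _

theorem abNorm_gen {d : ℕ} (x : FreeGroup (Fin d)) (hx : x ∈ freeGroupGens d) : abNorm x = 1 := by
  obtain ⟨a, rfl⟩ := (mem_freeGroupGens_iff x).1 hx
  unfold abNorm
  rw [abelianize_stepGen, sum_natAbs_stepVec]

theorem abNorm_walk {d : ℕ} {x y : FreeGroup (Fin d)}
    (w : (cayleyGraph (freeGroupGens d)).Walk x y) : abNorm (y * x⁻¹) ≤ w.length := by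
  induction w with
  | nil => simp [abNorm]
  | @cons u v z huv w ih =>
    have h1 : abNorm (v * u⁻¹) = 1 := by
      rcases huv.2 with h | h
      · exact abNorm_gen _ h
      · rw [← abNorm_inv]
        refine abNorm_gen _ ?_
        simpa using h
    have h2 := abNorm_mul_le (z * v⁻¹) (v * u⁻¹)
    have h3 : z * v⁻¹ * (v * u⁻¹) = z * u⁻¹ := by group
    rw [h3] at h2
    rw [SimpleGraph.Walk.length_cons]
    omega

theorem abNorm_le_dist {d : ℕ} (hc : (cayleyGraph (freeGroupGens d)).Connected)
    (x : FreeGroup (Fin d)) : abNorm x ≤ (cayleyGraph (freeGroupGens d)).dist 1 x := by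
  obtain ⟨w, hw⟩ := hc.exists_walk_length_eq_dist 1 x
  have := abNorm_walk w
  simp only [inv_one, mul_one] at this
  omega

theorem stepGen_injective {d : ℕ} (h : (freeGroupGens d).card = 2 * d) :
    Function.Injective (stepGen : Fin d × Bool → FreeGroup (Fin d)) := by
  have h1 : freeGroupGens d = Finset.univ.image stepGen := by
    ext x; rw [mem_freeGroupGens_iff]; simp
  rw [h1] at h
  have : (Finset.univ.image (stepGen : Fin d × Bool → FreeGroup (Fin d))).card
      = (Finset.univ : Finset (Fin d × Bool)).card := by
    rw [h]; simp [mul_comm]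
  have h2 := Finset.card_image_iff.1 this
  simpa using h2

/-- Laws of the coded step sequence. -/
def stepLaw {Ω T : Type*} [MeasurableSpace Ω] (P : Measure Ω) (X : ℕ → Ω → T) (n : ℕ)
    (s : Fin n → T) : ℝ := (P {ω | ∀ i : Fin n, X i ω = s i}).toReal

theorem measurableSet_path {Ω T : Type*} [MeasurableSpace Ω] (X : ℕ → Ω → T)
    (hX : ∀ k t, MeasurableSet {ω | X k ω = t}) (n : ℕ) (s : Fin n → T) :
    MeasurableSet {ω | ∀ i : Fin n, X i ω = s i} := by
  rw [Set.setOf_forall]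
  exact MeasurableSet.iInter fun i => hX _ _

theorem stepLaw_sum {Ω T : Type*} [MeasurableSpace Ω] [Fintype T] (P : Measure Ω)
    [IsProbabilityMeasure P] (X : ℕ → Ω → T)
    (hX : ∀ k t, MeasurableSet {ω | X k ω = t}) (n : ℕ) (A : (Fin n → T) → Prop) [DecidablePred A] :
    (P {ω | A fun i : Fin n => X i ω}).toReal
      = ∑ s : Fin n → T, if A s then stepLaw P X n s else 0 := by
  rw [← Finset.sum_filter]
  have h1 : {ω | A fun i : Fin n => X i ω} = ⋃ s ∈ Finset.univ.filter A,
      {ω | ∀ i : Fin n, X i ω = s i} := by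
    ext ω
    simp only [Set.mem_setOf_eq, Set.mem_iUnion, Finset.mem_filter, Finset.mem_univ, true_and,
      exists_prop]
    constructor
    · intro h; exact ⟨_, h, fun i => rfl⟩
    · rintro ⟨s, hs, h⟩
      have : (fun i : Fin n => X i ω) = s := funext h
      rwa [this]
  rw [h1, measure_biUnion_finset, ENNReal.toReal_sum]
  · rfl
  · intro s _; exact measure_ne_top _ _
  · intro s _ t _ hst
    refine Set.disjoint_left.2 fun ω h h' => hst ?_
    funext i
    rw [← h i, ← h' i]
  · intro s _; exact measurableSet_path X hX n s

theorem stepLaw_update {Ω : Type*} [MeasurableSpace Ω] {P : Measure Ω}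
    {d : ℕ} {p : ℝ} (E : ERW (FreeGroup (Fin d)) (2 * d) p Ω P)
    (hS : E.S = freeGroupGens d) (X : ℕ → Ω → Fin d × Bool)
    (hX : ∀ k ω, stepGen (X k ω) = E.g (k + 1) ω) (n : ℕ) (hn : 1 ≤ n)
    (s : Fin n → Fin d × Bool) (a : Fin d × Bool) :
    stepLaw P X (n + 1) (Fin.snoc s a)
      = ((1 / (n : ℝ)) * ∑ i, stepKer d p ((1 - p) / (2 * d - 1)) (s i) a) * stepLaw P X n s := by
  have hinj : Function.Injective (stepGen : Fin d × Bool → FreeGroup (Fin d)) :=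
    stepGen_injective (by rw [← hS]; exact E.card_S)
  set s' : ℕ → FreeGroup (Fin d) := fun k =>
    if h : k - 1 < n then stepGen (s ⟨k - 1, h⟩) else 1 with hs'
  have hs'i : ∀ i : Fin n, s' (i + 1) = stepGen (s i) := by
    intro i
    simp [hs']
  have hup := E.update n hn s' (stepGen a) (by rw [hS, mem_freeGroupGens_iff]; exact ⟨a, rfl⟩)
  have hset : {ω | ∀ k ∈ Finset.Icc 1 n, E.g k ω = s' k} = {ω | ∀ i : Fin n, X i ω = s i} := by
    ext ω
    simp only [Set.mem_setOf_eq, Finset.mem_Icc]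
    constructor
    · intro h i
      apply hinj
      rw [hX, h _ ⟨by omega, by omega⟩, hs'i]
    · rintro h k ⟨hk1, hk2⟩
      obtain ⟨k, rfl⟩ : ∃ j, k = j + 1 := ⟨k - 1, by omega⟩
      have := h ⟨k, by omega⟩
      rw [← hX, this, ← hs'i]
  have hset2 : {ω | ∀ k ∈ Finset.Icc 1 n, E.g k ω = s' k} ∩ {ω | E.g (n + 1) ω = stepGen a}
      = {ω | ∀ i : Fin (n + 1), X i ω = (Fin.snoc s a : Fin (n + 1) → Fin d × Bool) i} := by
    rw [hset]
    ext ω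
    simp only [Set.mem_inter_iff, Set.mem_setOf_eq, Fin.forall_fin_succ', Fin.snoc_castSucc,
      Fin.snoc_last, Fin.val_castSucc, Fin.val_last]
    rw [← hX, hinj.eq_iff]
  have hcount : (((Finset.Icc 1 n).filter fun k => s' k = stepGen a).card : ℝ)
      = ∑ i : Fin n, if s i = a then (1 : ℝ) else 0 := by
    rw [Finset.card_filter, Nat.cast_sum]
    have h0 : ∀ f : ℕ → ℝ, ∑ k ∈ Finset.Icc 1 n, f k = ∑ i : Fin n, f (i + 1) := by
      intro f
      rw [Fin.sum_univ_eq_sum_range (fun i => f (i + 1)) n]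
      clear * -
      induction n with
      | zero => simp
      | succ n ih => rw [Finset.sum_Icc_succ_top (by omega), ih, Finset.sum_range_succ]
    rw [h0]
    refine Finset.sum_congr rfl fun i _ => ?_
    rw [hs'i]
    simp only [hinj.eq_iff]
    split_ifs <;> simp
  have hker : ∑ i, stepKer d p ((1 - p) / (2 * d - 1)) (s i) a
      = p * (∑ i : Fin n, if s i = a then (1 : ℝ) else 0) + (1 - p) / (2 * d - 1) *
        (n - ∑ i : Fin n, if s i = a then (1 : ℝ) else 0) := by
    have : ∀ i, stepKer d p ((1 - p) / (2 * d - 1)) (s i) a = (1 - p) / (2 * d - 1) +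
        (p - (1 - p) / (2 * d - 1)) * (if s i = a then (1 : ℝ) else 0) := by
      intro i; unfold stepKer; split_ifs <;> ring
    simp_rw [this]
    rw [Finset.sum_add_distrib, ← Finset.mul_sum]
    simp only [Finset.sum_const, Finset.card_univ, Fintype.card_fin, nsmul_eq_mul]
    ring
  unfold stepLaw
  rw [← hset2, hup, hcount, hset, hker]
  push_cast
  ring

/-- on the free group `Z^{*d}` of rank `d ≥ 2` with its standard
`2d`-element symmetric generating set (so the Cayley graph is the `2d`-regular
tree), the word-metric distance `Δ n` of the ERW dominates the `ℓ¹`-norm of the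
multidimensional ERW `S n` on `ℤ^d` obtained by abelianizing the step sequence
(equivalently, of the abelianization of the position `w n`); consequently there is
`C > 0` with `P(Δ n = 0) ≤ C * n^(-d/2)` for all `n ≥ 1`. -/
theorem erw_free_group_return_prob
    {Ω : Type*} [MeasurableSpace Ω]
    {P : Measure Ω} [IsProbabilityMeasure P]
    (d : ℕ) (hd : 2 ≤ d) (p : ℝ) (hp0 : 0 ≤ p) (hp1 : p < 1)
    (E : ERW (FreeGroup (Fin d)) (2 * d) p Ω P)
    (hS : E.S = freeGroupGens d) :
    (∀ n : ℕ, ∀ ω : Ω,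
      ∑ i : Fin d,
          (Multiplicative.toAdd (freeGroupAbelianize d (E.pos n ω)) i).natAbs
        ≤ E.dist n ω) ∧
    ∃ C : ℝ, 0 < C ∧ ∀ n : ℕ, 1 ≤ n →
      (P {ω | E.dist n ω = 0}).toReal ≤ C * (n : ℝ) ^ (-((d : ℝ) / 2)) := by
  have hnorm : ∀ n ω, abNorm (E.pos n ω) ≤ E.dist n ω := by
    intro n ω
    unfold ERW.dist
    have hc := E.tree.1
    rw [hS] at hc ⊢
    exact abNorm_le_dist hc _
  refine ⟨hnorm, ?_⟩
  have hX0 : ∀ k ω, ∃ a : Fin d × Bool, stepGen a = E.g (k + 1) ω := by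
    intro k ω
    rw [← mem_freeGroupGens_iff, ← hS]
    exact E.mem_S _ (by omega) ω
  choose X hX using hX0
  have hinj : Function.Injective (stepGen : Fin d × Bool → FreeGroup (Fin d)) :=
    stepGen_injective (by rw [← hS]; exact E.card_S)
  have hmeas : ∀ k t, MeasurableSet {ω | X k ω = t} := by
    intro k t
    have : {ω | X k ω = t} = {ω | E.g (k + 1) ω = stepGen t} := by
      ext ω
      simp only [Set.mem_setOf_eq]
      rw [← hX, hinj.eq_iff]
    rw [this]
    exact E.meas_g _ _
  have hpos : ∀ n ω j, Multiplicative.toAdd (freeGroupAbelianize d (E.pos n ω)) j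
      = ∑ i : Fin n, stepVec (X i ω) j := by
    intro n ω j
    induction n with
    | zero => simp [ERW.pos]
    | succ n ih =>
      rw [Fin.sum_univ_castSucc]
      simp only [Fin.val_castSucc, Fin.val_last]
      rw [← ih, ERW.pos, map_mul, toAdd_mul, Pi.add_apply, ← hX, abelianize_stepGen, add_comm]
  have hd' : (2 : ℝ) ≤ d := by exact_mod_cast hd
  have hden : (0 : ℝ) < 2 * d - 1 := by linarith
  obtain ⟨C, hC0, hC⟩ := return_bound hd p ((1 - p) / (2 * d - 1)) hp0
    (div_pos (by linarith) hden) (by field_simp; ring) (stepLaw P X)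
    (fun n s => ENNReal.toReal_nonneg)
    (fun n => by
      have := stepLaw_sum P X hmeas n (fun _ => True)
      simp only [if_true] at this
      rw [← this]
      simp)
    (fun n hn s a => stepLaw_update E hS X hX n hn s a)
  refine ⟨C, hC0, fun n hn => le_trans ?_ (hC n hn)⟩
  rw [← stepLaw_sum P X hmeas n (fun s => ∀ j, ∑ i, stepVec (s i) j = 0)]
  refine ENNReal.toReal_mono (measure_ne_top _ _) (measure_mono ?_)
  intro ω hω j
  have h1 := hnorm n ω
  rw [Set.mem_setOf_eq] at hω
  rw [hω, Nat.le_zero] at h1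
  unfold abNorm at h1
  rw [Finset.sum_eq_zero_iff] at h1
  have := h1 j (Finset.mem_univ j)
  rw [hpos, Int.natAbs_eq_zero] at this
  exact this

end
end
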